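/- arXiv:2202.08727 — 7 statements merged into one kernel-verified Lean document; each statement's English description precedes it below -/
import Mathlib

section
/- Let N ≥ 2 be an integer and let ψ be a model function which is nondecreasing on [0,∞). Then the associated function H satisfies (H'(r))² ≤ 2 H(r) for every r ≥ 0. -/
open Real MeasureTheory Set Filter

/-- The function `H` associated with a model function `ψ` on an `N`-dimensional model
manifold: `H r = ∫₀^r (∫₀^s ψ(t)^{N-1} dt) / ψ(s)^{N-1} ds`. -/
noncomputable def Hfun (N : ℕ) (ψ : ℝ → ℝ) (r : ℝ) : ℝ :=
  ∫ s in (0:ℝ)..r, (∫ t in (0:ℝ)..s, ψ t ^ (N - 1)) / ψ s ^ (N - 1)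

/-!
Write `W = V / w` with `w = ψ ^ (N - 1)` and `V r = ∫₀^r w`, so that `H' = W`. As `w` is
nondecreasing, `W' = 1 - W w' / w ≤ 1`; without derivatives, `W s - s` is nonincreasing. Hence the
graph of `W` over `[0, r]` lies above the line of slope `1` through `(r, W r)`, and the triangle of
area `W r ^ 2 / 2` under that line fits under the graph.
-/

theorem sq_le_two_mul_integral_of_antitoneOn_sub_id {g : ℝ → ℝ} {a b : ℝ} (hab : a ≤ b)
    (hg : AntitoneOn (fun s => g s - s) (Icc a b)) (ha : g a ≤ 0)
    (hnonneg : ∀ s ∈ Icc a b, 0 ≤ g s) :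
    g b ^ 2 ≤ 2 * ∫ s in a..b, g s := by
  have hb : b ∈ Icc a b := right_mem_Icc.2 hab
  have hgb : 0 ≤ g b := hnonneg b hb
  have hbase : a ≤ b - g b := by
    have : g b - b ≤ g a - a := hg (left_mem_Icc.2 hab) hb hab
    linarith
  have hint : IntervalIntegrable g volume a b := by
    rw [← uIcc_of_le hab] at hg
    simpa using hg.intervalIntegrable.add intervalIntegral.intervalIntegrable_id
  have hint_base : IntervalIntegrable g volume (b - g b) b :=
    hint.mono_set (uIcc_subset_uIcc (mem_uIcc_of_le hbase (by linarith)) right_mem_uIcc)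
  have hline : ∀ s ∈ Icc (b - g b) b, s - (b - g b) ≤ g s := fun s hs => by
    have : g b - b ≤ g s - s := hg ⟨hbase.trans hs.1, hs.2⟩ hb hs.2
    linarith
  have htriangle : ∫ s in (b - g b)..b, (s - (b - g b)) = g b ^ 2 / 2 := by
    rw [intervalIntegral.integral_comp_sub_right (fun s => s), integral_id]
    ring
  calc g b ^ 2 = 2 * ∫ s in (b - g b)..b, (s - (b - g b)) := by rw [htriangle]; ring
    _ ≤ 2 * ∫ s in (b - g b)..b, g s := by
      gcongr
      exact intervalIntegral.integral_mono_on (by linarith)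
        (Continuous.intervalIntegrable (by fun_prop) _ _) hint_base hline
    _ ≤ 2 * ∫ s in a..b, g s := by
      gcongr
      refine intervalIntegral.integral_mono_interval hbase (by linarith) le_rfl ?_ hint
      exact ae_restrict_of_forall_mem measurableSet_Ioc
        fun s hs => hnonneg s (Ioc_subset_Icc_self hs)

theorem deriv_integral_of_continuousOn_Ici {E : Type*} [NormedAddCommGroup E] [NormedSpace ℝ E]
    [CompleteSpace E] {g : ℝ → E} {a b : ℝ} (hg : ContinuousOn g (Ici a)) (ha : g a = 0)
    (hab : a ≤ b) :
    deriv (fun x => ∫ s in a..x, g s) b = g b := by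
  have hIoi : ContinuousOn g (Ioi a) := hg.mono Ioi_subset_Ici_self
  rcases hab.eq_or_lt with rfl | hlt
  -- Only the right derivative is known at `a`. Since it vanishes, it agrees with the junk value of
  -- `deriv` in case the primitive is not differentiable at `a`.
  · have hright : HasDerivWithinAt (fun x => ∫ s in a..x, g s) (g a) (Ici a) a :=
      intervalIntegral.integral_hasDerivWithinAt_right (t := Ioi a) .refl
        ⟨Ioi a, self_mem_nhdsWithin, hIoi.aestronglyMeasurable measurableSet_Ioi⟩
        ((hg a self_mem_Ici).mono Ioi_subset_Ici_self)
    rw [ha] at hright ⊢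
    exact hright.deriv_eq_zero (uniqueDiffOn_Ici a a self_mem_Ici)
  · have hint : IntervalIntegrable g volume a b :=
      (hg.mono Icc_subset_Ici_self).intervalIntegrable_of_Icc hab
    exact (intervalIntegral.integral_hasDerivAt_right hint
      (hIoi.stronglyMeasurableAtFilter isOpen_Ioi b hlt)
      (hg.continuousAt (Ici_mem_nhds hlt))).deriv

theorem intervalIntegrable_of_monotoneOn_Ici {w : ℝ → ℝ} {a b c : ℝ}
    (hmono : MonotoneOn w (Ici a)) (hb : a ≤ b) (hc : a ≤ c) : IntervalIntegrable w volume b c :=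
  (hmono.mono fun _ hx => (le_min hb hc).trans hx.1).intervalIntegrable

theorem integral_nonneg_of_nonneg_on_Ioc {w : ℝ → ℝ} {a b : ℝ} (hab : a ≤ b)
    (hw : ∀ t ∈ Ioc a b, 0 ≤ w t) : 0 ≤ ∫ t in a..b, w t := by
  rw [intervalIntegral.integral_of_le hab]
  exact setIntegral_nonneg measurableSet_Ioc hw

theorem integral_le_integral_add_sub_mul_of_monotoneOn {w : ℝ → ℝ} {a s r : ℝ}
    (hmono : MonotoneOn w (Ici a)) (hs : a ≤ s) (hsr : s ≤ r) :
    ∫ t in a..r, w t ≤ (∫ t in a..s, w t) + (r - s) * w r := by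
  have hr : a ≤ r := hs.trans hsr
  have hint_initial : IntervalIntegrable w volume a s :=
    intervalIntegrable_of_monotoneOn_Ici hmono le_rfl hs
  have hint_final : IntervalIntegrable w volume s r :=
    intervalIntegrable_of_monotoneOn_Ici hmono hs hr
  have hfinal : ∫ t in s..r, w t ≤ (r - s) * w r := by
    rw [← smul_eq_mul, ← intervalIntegral.integral_const]
    exact intervalIntegral.integral_mono_on hsr hint_final intervalIntegrable_const
      fun t ht => hmono (hs.trans ht.1) hr ht.2
  rw [← intervalIntegral.integral_add_adjacent_intervals hint_initial hint_final]
  gcongr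

/-- The ratio of the volume of a ball of radius `r` to the area of its boundary sphere, on a model
manifold whose sphere of radius `t` has area proportional to `w t`. In dimension `N` with model
function `ψ` the weight is `w = ψ ^ (N - 1)`, and `Hfun N ψ` is the primitive of this ratio. -/
noncomputable def volumeAreaRatio (w : ℝ → ℝ) (r : ℝ) : ℝ :=
  (∫ t in (0 : ℝ)..r, w t) / w r

section volumeAreaRatio

variable {w : ℝ → ℝ}

theorem volumeAreaRatio_zero : volumeAreaRatio w 0 = 0 := by
  simp [volumeAreaRatio]

theorem volumeAreaRatio_nonneg (hpos : ∀ t > 0, 0 < w t) {r : ℝ} (hr : 0 ≤ r) :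
    0 ≤ volumeAreaRatio w r := by
  rcases hr.eq_or_lt with rfl | hr'
  · exact volumeAreaRatio_zero.ge
  · exact div_nonneg (integral_nonneg_of_nonneg_on_Ioc hr fun t ht => (hpos t ht.1).le)
      (hpos r hr').le

theorem antitoneOn_volumeAreaRatio_sub_id (hmono : MonotoneOn w (Ici 0))
    (hpos : ∀ t > 0, 0 < w t) : AntitoneOn (fun s => volumeAreaRatio w s - s) (Ici 0) := by
  intro s hs r hr hsr
  rcases (mem_Ici.1 hr).eq_or_lt with rfl | hr'
  · rw [le_antisymm hsr hs]
  have hwr : 0 < w r := hpos r hr'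
  have hratio : (∫ t in (0 : ℝ)..s, w t) / w r ≤ volumeAreaRatio w s := by
    rcases (mem_Ici.1 hs).eq_or_lt with rfl | hs'
    · simp [volumeAreaRatio]
    · exact div_le_div_of_nonneg_left
        (integral_nonneg_of_nonneg_on_Ioc hs fun t ht => (hpos t ht.1).le) (hpos s hs')
        (hmono hs hr hsr)
  have hle : volumeAreaRatio w r ≤ volumeAreaRatio w s + (r - s) :=
    calc volumeAreaRatio w r
        ≤ ((∫ t in (0 : ℝ)..s, w t) + (r - s) * w r) / w r := by
          unfold volumeAreaRatio
          gcongr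
          exact integral_le_integral_add_sub_mul_of_monotoneOn hmono hs hsr
      _ = (∫ t in (0 : ℝ)..s, w t) / w r + (r - s) := by field_simp
      _ ≤ volumeAreaRatio w s + (r - s) := by gcongr
  change volumeAreaRatio w r - r ≤ volumeAreaRatio w s - s
  linarith

theorem volumeAreaRatio_le_self (hmono : MonotoneOn w (Ici 0)) (hpos : ∀ t > 0, 0 < w t) {r : ℝ}
    (hr : 0 ≤ r) : volumeAreaRatio w r ≤ r := by
  simpa [volumeAreaRatio_zero] using antitoneOn_volumeAreaRatio_sub_id hmono hpos self_mem_Ici hr hr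

theorem continuousOn_volumeAreaRatio (hcont : ContinuousOn w (Ici 0))
    (hmono : MonotoneOn w (Ici 0)) (hpos : ∀ t > 0, 0 < w t) :
    ContinuousOn (volumeAreaRatio w) (Ici 0) := by
  intro s hs
  rcases (mem_Ici.1 hs).eq_or_lt with rfl | hs'
  -- The quotient is `0 / 0` at the origin when `w 0 = 0`, so squeeze it between `0` and `s`.
  · rw [ContinuousWithinAt, volumeAreaRatio_zero]
    refine tendsto_of_tendsto_of_tendsto_of_le_of_le' tendsto_const_nhds
      (tendsto_id.mono_left nhdsWithin_le_nhds) ?_ ?_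
    · exact eventually_mem_nhdsWithin.mono fun _ => volumeAreaRatio_nonneg hpos
    · exact eventually_mem_nhdsWithin.mono fun _ => volumeAreaRatio_le_self hmono hpos
  · have hw : ContinuousAt w s := hcont.continuousAt (Ici_mem_nhds hs')
    have hvolume : HasDerivAt (fun r => ∫ t in (0 : ℝ)..r, w t) (w s) s :=
      intervalIntegral.integral_hasDerivAt_right
        (intervalIntegrable_of_monotoneOn_Ici hmono le_rfl hs)
        ((hcont.mono Ioi_subset_Ici_self).stronglyMeasurableAtFilter isOpen_Ioi s hs') hw
    exact (hvolume.continuousAt.div hw (hpos s hs').ne').continuousWithinAt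

end volumeAreaRatio

theorem statement0_general {w : ℝ → ℝ} (hcont : ContinuousOn w (Ici 0))
    (hmono : MonotoneOn w (Ici 0)) (hpos : ∀ t > 0, 0 < w t) {r : ℝ} (hr : 0 ≤ r) :
    deriv (fun x => ∫ s in (0 : ℝ)..x, volumeAreaRatio w s) r ^ 2 ≤
      2 * ∫ s in (0 : ℝ)..r, volumeAreaRatio w s := by
  rw [deriv_integral_of_continuousOn_Ici (continuousOn_volumeAreaRatio hcont hmono hpos)
    volumeAreaRatio_zero hr]
  exact sq_le_two_mul_integral_of_antitoneOn_sub_id hr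
    ((antitoneOn_volumeAreaRatio_sub_id hmono hpos).mono Icc_subset_Ici_self)
    volumeAreaRatio_zero.le fun _ hs => volumeAreaRatio_nonneg hpos hs.1

/-- If `N ≥ 2` and `ψ` is a model function which is nondecreasing on `[0,∞)`, then the
associated function `H` satisfies `(H'(r))² ≤ 2 H(r)` for every `r ≥ 0`. -/
theorem statement0 (N : ℕ) (hN : 2 ≤ N) (ψ : ℝ → ℝ)
    (hsmooth : ContDiffOn ℝ (⊤ : ℕ∞) ψ (Ici 0))
    (hψ0 : ψ 0 = 0) (hψ'0 : deriv ψ 0 = 1)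
    (hψpos : ∀ r > (0:ℝ), 0 < ψ r)
    (hmono : MonotoneOn ψ (Ici 0)) :
    ∀ r ≥ (0:ℝ), (deriv (Hfun N ψ) r) ^ 2 ≤ 2 * Hfun N ψ r := by
  have hnonneg : MapsTo ψ (Ici 0) {x | 0 ≤ x} := fun t ht => hψ0.ge.trans (hmono self_mem_Ici ht ht)
  exact fun r hr => statement0_general (hsmooth.continuousOn.pow (N - 1))
    ((pow_left_monotoneOn (n := N - 1)).comp hmono hnonneg) (fun t ht => pow_pos (hψpos t ht) _) hr
end

section
/- Let m > 1, let N ≥ 2 be an integer, and let ψ be a model function which is nondecreasing. Suppose U: [0,∞) → ℝ is a nondecreasing C¹ function with U(0) = 1 and U(r) ≥ 1 for all r, satisfying the integral equation U'(r) ψ(r)^{N-1} = ∫₀^r ψ(s)^{N-1} U(s)^{1/m} ds for all r > 0. Then U(r)^{(m-1)/m} ≤ 1 + ((m-1)/m) H(r) for every r ≥ 0; in particular U(r) ≤ (1 + H(r))^{m/(m-1)} for every r ≥ 0. -/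
open Real MeasureTheory Set Filter

/-!
Write `w = ψ ^ (N - 1)` and `h r = (∫₀^r w) / w r`, so that `H' = h`. Along a solution `U' ≥ 0`,
hence `U 0 ≤ U s ≤ U r` for `0 ≤ s ≤ r`, and pulling `U` out of the integral equation gives
`(U 0) ^ (1 / m) * h ≤ U' ≤ U ^ (1 / m) * h`. The right inequality reads
`(U ^ ((m - 1) / m))' ≤ ((m - 1) / m) * h` and integrates to the claim, as in Bihari's inequality.
The left one dominates `h` by the derivative of a monotone function: this makes `h` integrable down
to the origin, where `w` may vanish.
-/

/-- A radial density on `(0, R]`, such as `ψ ^ (N - 1)` on a model manifold. Positivity at the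
origin is not required, so that densities vanishing at the pole are allowed. -/
structure IsRadialWeight (w : ℝ → ℝ) (R : ℝ) : Prop where
  intervalIntegrable : IntervalIntegrable w volume 0 R
  pos : ∀ r ∈ Ioc 0 R, 0 < w r

/-- The slope `H' = (∫₀^r w) / w r` of the radial torsion function `H` of the weight `w`, that is,
of the solution of `(w H')' = w` with vanishing flux `w H'` at the origin. -/
noncomputable def torsionSlope (w : ℝ → ℝ) (r : ℝ) : ℝ :=
  (∫ t in (0 : ℝ)..r, w t) / w r

/-- `U`, with derivative `U'`, solves the radial equation `(w U')' = w f(U)` on `[0, R]` with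
vanishing flux at the origin. The equation is encoded in its once-integrated form, which does not
require `w` or `U'` to be differentiable. -/
structure IsRadialSolution (w f U U' : ℝ → ℝ) (R : ℝ) : Prop where
  continuousOn : ContinuousOn U (Icc 0 R)
  hasDerivAt : ∀ r ∈ Ioo 0 R, HasDerivAt U (U' r) r
  flux_eq : ∀ r ∈ Ioo 0 R, U' r * w r = ∫ s in (0 : ℝ)..r, w s * f (U s)

namespace IsRadialWeight

variable {w : ℝ → ℝ} {R r : ℝ}

lemma mono (hw : IsRadialWeight w R) (hr : r ∈ Icc 0 R) : IsRadialWeight w r where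
  intervalIntegrable := hw.intervalIntegrable.mono_set <| by
    rw [uIcc_of_le hr.1, uIcc_of_le (hr.1.trans hr.2)]
    exact Icc_subset_Icc_right hr.2
  pos s hs := hw.pos s ⟨hs.1, hs.2.trans hr.2⟩

lemma integral_mul_mono (hw : IsRadialWeight w R) (hR : 0 ≤ R) {g₁ g₂ : ℝ → ℝ}
    (hg₁ : ContinuousOn g₁ (Icc 0 R)) (hg₂ : ContinuousOn g₂ (Icc 0 R))
    (hle : ∀ s ∈ Icc 0 R, g₁ s ≤ g₂ s) :
    ∫ s in (0 : ℝ)..R, w s * g₁ s ≤ ∫ s in (0 : ℝ)..R, w s * g₂ s := by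
  rw [← uIcc_of_le hR] at hg₁ hg₂
  refine intervalIntegral.integral_mono_on_of_le_Ioo hR
    (hw.intervalIntegrable.mul_continuousOn hg₁) (hw.intervalIntegrable.mul_continuousOn hg₂) ?_
  intro s hs
  exact mul_le_mul_of_nonneg_left (hle s (Ioo_subset_Icc_self hs))
    (hw.pos s (Ioo_subset_Ioc_self hs)).le

lemma torsionSlope_nonneg (hw : IsRadialWeight w R) (hr : r ∈ Icc 0 R) :
    0 ≤ torsionSlope w r := by
  rcases hr.1.eq_or_lt with rfl | hr0
  · simp [torsionSlope]
  · have hmass : 0 < ∫ t in (0 : ℝ)..r, w t :=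
      intervalIntegral.intervalIntegral_pos_of_pos_on (hw.mono hr).intervalIntegrable
        (fun s hs => hw.pos s ⟨hs.1, hs.2.le.trans hr.2⟩) hr0
    exact div_nonneg hmass.le (hw.pos r ⟨hr0, hr.2⟩).le

lemma integral_torsionSlope_nonneg (hw : IsRadialWeight w R) (hR : 0 ≤ R) :
    0 ≤ ∫ s in (0 : ℝ)..R, torsionSlope w s :=
  intervalIntegral.integral_nonneg hR fun _ hs => hw.torsionSlope_nonneg hs

lemma aestronglyMeasurable_torsionSlope (hw : IsRadialWeight w R) (hR : 0 ≤ R) :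
    AEStronglyMeasurable (torsionSlope w) (volume.restrict (Ioc 0 R)) := by
  have hmass : ContinuousOn (fun r => ∫ t in (0 : ℝ)..r, w t) (Ioc 0 R) :=
    (intervalIntegral.continuousOn_primitive_interval' hw.intervalIntegrable
      left_mem_uIcc).mono <| by
        rw [uIcc_of_le hR]
        exact Ioc_subset_Icc_self
  exact ((hmass.aestronglyMeasurable measurableSet_Ioc).aemeasurable.div
    hw.intervalIntegrable.aestronglyMeasurable.aemeasurable).aestronglyMeasurable

end IsRadialWeight

namespace IsRadialSolution

variable {w f U U' : ℝ → ℝ} {R r : ℝ}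

lemma deriv_nonneg (hU : IsRadialSolution w f U U' R) (hw : IsRadialWeight w R)
    (hfU : ∀ s ∈ Icc 0 R, 0 ≤ f (U s)) (hr : r ∈ Ioo 0 R) : 0 ≤ U' r := by
  refine nonneg_of_mul_nonneg_left ?_ (hw.pos r (Ioo_subset_Ioc_self hr))
  rw [hU.flux_eq r hr, intervalIntegral.integral_of_le hr.1.le]
  refine setIntegral_nonneg measurableSet_Ioc fun s hs => ?_
  have hsR : s ∈ Ioc 0 R := ⟨hs.1, hs.2.trans hr.2.le⟩
  exact mul_nonneg (hw.pos s hsR).le (hfU s (Ioc_subset_Icc_self hsR))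

lemma monotoneOn (hU : IsRadialSolution w f U U' R) (hw : IsRadialWeight w R)
    (hfU : ∀ s ∈ Icc 0 R, 0 ≤ f (U s)) : MonotoneOn U (Icc 0 R) := by
  refine monotoneOn_of_hasDerivWithinAt_nonneg (f' := U') (convex_Icc 0 R) hU.continuousOn ?_ ?_
  all_goals rw [interior_Icc]
  · exact fun r hr => (hU.hasDerivAt r hr).hasDerivWithinAt
  · exact fun r hr => hU.deriv_nonneg hw hfU hr

lemma mapsTo_Ici (hU : IsRadialSolution w f U U' R) (hw : IsRadialWeight w R)
    (hfU : ∀ s ∈ Icc 0 R, 0 ≤ f (U s)) : MapsTo U (Icc 0 R) (Ici (U 0)) := fun _ hs =>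
  hU.monotoneOn hw hfU (left_mem_Icc.2 (hs.1.trans hs.2)) hs hs.1

lemma mul_torsionSlope_le_deriv (hU : IsRadialSolution w f U U' R) (hw : IsRadialWeight w R)
    (hfU : ∀ s ∈ Icc 0 R, 0 ≤ f (U s)) (hf_cont : ContinuousOn f (Ici (U 0)))
    (hf_mono : MonotoneOn f (Ici (U 0))) (hr : r ∈ Ioo 0 R) :
    f (U 0) * torsionSlope w r ≤ U' r := by
  have hUmaps := hU.mapsTo_Ici hw hfU
  have hsub : Icc 0 r ⊆ Icc 0 R := Icc_subset_Icc_right hr.2.le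
  rw [torsionSlope, ← mul_div_assoc, div_le_iff₀ (hw.pos r (Ioo_subset_Ioc_self hr)),
    hU.flux_eq r hr, mul_comm, ← intervalIntegral.integral_mul_const]
  exact (hw.mono (Ioo_subset_Icc_self hr)).integral_mul_mono hr.1.le continuousOn_const
    ((hf_cont.comp hU.continuousOn hUmaps).mono hsub)
    fun s hs => hf_mono self_mem_Ici (hUmaps (hsub hs)) (hUmaps (hsub hs))

lemma deriv_le_mul_torsionSlope (hU : IsRadialSolution w f U U' R) (hw : IsRadialWeight w R)
    (hfU : ∀ s ∈ Icc 0 R, 0 ≤ f (U s)) (hf_cont : ContinuousOn f (Ici (U 0)))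
    (hf_mono : MonotoneOn f (Ici (U 0))) (hr : r ∈ Ioo 0 R) :
    U' r ≤ f (U r) * torsionSlope w r := by
  have hUmaps := hU.mapsTo_Ici hw hfU
  have hsub : Icc 0 r ⊆ Icc 0 R := Icc_subset_Icc_right hr.2.le
  have hrR : r ∈ Icc 0 R := Ioo_subset_Icc_self hr
  rw [torsionSlope, ← mul_div_assoc, le_div_iff₀ (hw.pos r (Ioo_subset_Ioc_self hr)),
    hU.flux_eq r hr, mul_comm (f (U r)), ← intervalIntegral.integral_mul_const]
  exact (hw.mono hrR).integral_mul_mono hr.1.le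
    ((hf_cont.comp hU.continuousOn hUmaps).mono hsub) continuousOn_const
    fun s hs => hf_mono (hUmaps (hsub hs)) (hUmaps hrR) (hU.monotoneOn hw hfU (hsub hs) hrR hs.2)

lemma integrableOn_torsionSlope (hU : IsRadialSolution w f U U' R) (hw : IsRadialWeight w R)
    (hR : 0 ≤ R) (hfU : ∀ s ∈ Icc 0 R, 0 ≤ f (U s)) (hf_cont : ContinuousOn f (Ici (U 0)))
    (hf_mono : MonotoneOn f (Ici (U 0))) (hf_pos : 0 < f (U 0)) :
    IntegrableOn (torsionSlope w) (Icc 0 R) := by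
  have hU'_int : IntegrableOn U' (Ioo 0 R) :=
    (intervalIntegral.integrableOn_deriv_of_nonneg hU.continuousOn hU.hasDerivAt
      fun r hr => hU.deriv_nonneg hw hfU hr).mono_set Ioo_subset_Ioc_self
  have hbound : ∀ r ∈ Ioo 0 R, ‖torsionSlope w r‖ ≤ U' r / f (U 0) := fun r hr => by
    rw [norm_of_nonneg (hw.torsionSlope_nonneg (Ioo_subset_Icc_self hr)), le_div_iff₀' hf_pos]
    exact hU.mul_torsionSlope_le_deriv hw hfU hf_cont hf_mono hr
  rw [integrableOn_Icc_iff_integrableOn_Ioo]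
  exact (hU'_int.div_const _).mono'
    ((hw.aestronglyMeasurable_torsionSlope hR).mono_set Ioo_subset_Ioc_self)
    (ae_restrict_of_forall_mem measurableSet_Ioo hbound)

lemma antideriv_inv_sub_le_integral_torsionSlope (hU : IsRadialSolution w f U U' R)
    (hw : IsRadialWeight w R) (hR : 0 ≤ R) (hfU : ∀ s ∈ Icc 0 R, 0 ≤ f (U s))
    (hf_cont : ContinuousOn f (Ici (U 0))) (hf_mono : MonotoneOn f (Ici (U 0)))
    (hf_pos : 0 < f (U 0)) {F : ℝ → ℝ} (hF : ∀ x ∈ Ici (U 0), HasDerivAt F (f x)⁻¹ x) :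
    F (U R) - F (U 0) ≤ ∫ s in (0 : ℝ)..R, torsionSlope w s := by
  have hUmaps := hU.mapsTo_Ici hw hfU
  have hF_cont : ContinuousOn F (Ici (U 0)) := HasDerivAt.continuousOn hF
  have hFU : ∀ r ∈ Ioo 0 R, HasDerivAt (F ∘ U) ((f (U r))⁻¹ * U' r) r := fun r hr =>
    (hF _ (hUmaps (Ioo_subset_Icc_self hr))).comp r (hU.hasDerivAt r hr)
  have hFU_le : ∀ r ∈ Ioo 0 R, (f (U r))⁻¹ * U' r ≤ torsionSlope w r := fun r hr => by
    have hUr := hUmaps (Ioo_subset_Icc_self hr)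
    rw [inv_mul_le_iff₀ (hf_pos.trans_le (hf_mono self_mem_Ici hUr hUr))]
    exact hU.deriv_le_mul_torsionSlope hw hfU hf_cont hf_mono hr
  exact intervalIntegral.sub_le_integral_of_hasDeriv_right_of_le hR
    (hF_cont.comp hU.continuousOn hUmaps) (fun r hr => (hFU r hr).hasDerivWithinAt)
    (hU.integrableOn_torsionSlope hw hR hfU hf_cont hf_mono hf_pos) hFU_le

lemma rpow_one_sub_le {p : ℝ} (hU : IsRadialSolution w (· ^ p) U U' R) (hw : IsRadialWeight w R)
    (hR : 0 ≤ R) (hp0 : 0 ≤ p) (hp1 : p < 1) (hU0 : 0 < U 0) (hU_nonneg : ∀ s ∈ Icc 0 R, 0 ≤ U s) :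
    U R ^ (1 - p) ≤ U 0 ^ (1 - p) + (1 - p) * ∫ s in (0 : ℝ)..R, torsionSlope w s := by
  have hq : 0 < 1 - p := sub_pos.2 hp1
  have hF : ∀ x ∈ Ici (U 0), HasDerivAt (fun y : ℝ => y ^ (1 - p) / (1 - p)) (x ^ p)⁻¹ x := by
    intro x hx
    have hx0 : 0 < x := hU0.trans_le hx
    have hderiv := (hasDerivAt_rpow_const (p := 1 - p) (Or.inl hx0.ne')).div_const (1 - p)
    rwa [mul_div_cancel_left₀ _ hq.ne', sub_sub_cancel_left, rpow_neg hx0.le] at hderiv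
  have hbihari := hU.antideriv_inv_sub_le_integral_torsionSlope hw hR
    (fun s hs => rpow_nonneg (hU_nonneg s hs) p) (continuous_rpow_const hp0).continuousOn
    (fun x hx y _ hxy => rpow_le_rpow (hU0.le.trans hx) hxy hp0) (rpow_pos_of_pos hU0 p) hF
  rw [← sub_div, div_le_iff₀' hq] at hbihari
  linarith

end IsRadialSolution

theorem statement2_general {m R : ℝ} {w U U' : ℝ → ℝ} (hm : 1 < m) (hR : 0 ≤ R)
    (hw : IsRadialWeight w R) (hU : IsRadialSolution w (· ^ (1 / m)) U U' R) (hU0 : U 0 = 1)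
    (hU_nonneg : ∀ s ∈ Icc 0 R, 0 ≤ U s) :
    U R ^ ((m - 1) / m) ≤ 1 + (m - 1) / m * ∫ s in (0 : ℝ)..R, torsionSlope w s ∧
      U R ≤ (1 + ∫ s in (0 : ℝ)..R, torsionSlope w s) ^ (m / (m - 1)) := by
  have hm0 : 0 < m := by linarith
  have hexp : 1 - 1 / m = (m - 1) / m := by field_simp
  have hexp_pos : 0 < (m - 1) / m := div_pos (by linarith) hm0
  have hexp_le : (m - 1) / m ≤ 1 := (div_le_one hm0).2 (by linarith)
  have hH : 0 ≤ ∫ s in (0 : ℝ)..R, torsionSlope w s := hw.integral_torsionSlope_nonneg hR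
  have hbound := hU.rpow_one_sub_le hw hR (by positivity) ((div_lt_one hm0).2 hm)
    (hU0 ▸ one_pos) hU_nonneg
  rw [hU0, one_rpow, hexp] at hbound
  refine ⟨hbound, ?_⟩
  rw [← inv_div, le_rpow_inv_iff_of_pos (hU_nonneg R (right_mem_Icc.2 hR)) (by linarith) hexp_pos]
  exact hbound.trans (by gcongr; exact mul_le_of_le_one_left hH hexp_le)

/-- Upper bound for solutions of the radial ODE `(ψ^{N-1} U')' = ψ^{N-1} U^{1/m}`:
if `U` is nondecreasing, `C¹`, `U(0)=1`, `U ≥ 1`, and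
`U'(r) ψ(r)^{N-1} = ∫₀^r ψ(s)^{N-1} U(s)^{1/m} ds` for `r > 0`, then
`U(r)^{(m-1)/m} ≤ 1 + ((m-1)/m) H(r)` and hence `U(r) ≤ (1+H(r))^{m/(m-1)}`. -/
theorem statement2 (m : ℝ) (hm : 1 < m) (N : ℕ) (hN : 2 ≤ N) (ψ : ℝ → ℝ)
    (hsmooth : ContDiffOn ℝ (⊤ : ℕ∞) ψ (Ici 0))
    (hψ0 : ψ 0 = 0) (hψ'0 : deriv ψ 0 = 1)
    (hψpos : ∀ r > (0:ℝ), 0 < ψ r)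
    (hmono : MonotoneOn ψ (Ici 0))
    (U : ℝ → ℝ) (hUC1 : ContDiffOn ℝ 1 U (Ici 0))
    (hUmono : MonotoneOn U (Ici 0))
    (hU0 : U 0 = 1) (hU1 : ∀ r ≥ (0:ℝ), 1 ≤ U r)
    (hUeq : ∀ r > (0:ℝ), deriv U r * ψ r ^ (N - 1)
        = ∫ s in (0:ℝ)..r, ψ s ^ (N - 1) * U s ^ (1/m)) :
    ∀ r ≥ (0:ℝ), U r ^ ((m-1)/m) ≤ 1 + (m-1)/m * Hfun N ψ r ∧
      U r ≤ (1 + Hfun N ψ r) ^ (m/(m-1)) := by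
  intro r hr
  have hsub : Icc 0 r ⊆ Ici 0 := Icc_subset_Ici_self
  have hw : IsRadialWeight (fun s => ψ s ^ (N - 1)) r :=
    { intervalIntegrable := ((hsmooth.continuousOn.pow _).mono hsub).intervalIntegrable_of_Icc hr
      pos := fun s hs => pow_pos (hψpos s hs.1) _ }
  have hU : IsRadialSolution (fun s => ψ s ^ (N - 1)) (· ^ (1 / m)) U (deriv U) r :=
    { continuousOn := hUC1.continuousOn.mono hsub
      hasDerivAt := fun s hs =>
        ((hUC1.differentiableOn one_ne_zero).differentiableAt (Ici_mem_nhds hs.1)).hasDerivAt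
      flux_eq := fun s hs => hUeq s hs.1 }
  exact statement2_general hm hr hw hU hU0 fun s hs => zero_le_one.trans (hU1 s hs.1)
end

section
/- Let m > 1, let N ≥ 2 be an integer, and let ψ be a model function whose associated function H satisfies (H'(r))² ≤ 2 H(r) for all r ≥ 0. Then, for every p with 0 < p ≤ m/(m-1) and every r > 0, ∫₀^r ψ(s)^{N-1} H(s)^{p/m} ds ≥ (m/(m+2p)) H(r)^{p/m} ∫₀^r ψ(s)^{N-1} ds; in particular the left-hand side is at least ((m-1)/(m+1)) H(r)^{p/m} ∫₀^r ψ(s)^{N-1} ds. -/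
/-!
Write `w = ψ ^ (N - 1)` and `A s = ∫₀ˢ w`, so that `H' = A / w`. Since `A = w H'`, the bound
`(H')² ≤ 2 H` gives, for every exponent `a ≥ 0`,
`(Hᵃ A)' = Hᵃ w + a Hᵃ⁻¹ (H')² w ≤ (1 + 2 a) w Hᵃ`,
and integrating from `0` to `r` yields `Hᵃ A ≤ (1 + 2 a) ∫₀ʳ w Hᵃ`. The theorem is the case
`a = p / m`. The only delicate point is the integrability of `A / w` at the zero of `w`, which holds
because `w` is comparable to the monotone function `s ^ (N - 1)` near `0`, so that `A / w = O(s)`.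
-/

open Real MeasureTheory Set Filter

section Weight

open Asymptotics
open scoped Interval Topology

variable {w : ℝ → ℝ} {l r : ℝ}

lemma continuousOn_integral_Icc (hlr : l ≤ r) (hw : IntervalIntegrable w volume l r) :
    ContinuousOn (fun x => ∫ t in l..x, w t) (Icc l r) := by
  simpa only [uIcc_of_le hlr] using
    intervalIntegral.continuousOn_primitive_interval' hw left_mem_uIcc

lemma hasDerivAt_integral_of_continuousOn_Ioo {x : ℝ} (hw : IntervalIntegrable w volume l r)
    (hwc : ContinuousOn w (Ioo l r)) (hx : x ∈ Ioo l r) :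
    HasDerivAt (fun y => ∫ t in l..y, w t) (w x) x := by
  have hwx : IntervalIntegrable w volume l x :=
    hw.mono_set (uIcc_subset_uIcc_left (Icc_subset_uIcc ⟨hx.1.le, hx.2.le⟩))
  exact intervalIntegral.integral_hasDerivAt_right hwx
    (hwc.stronglyMeasurableAtFilter isOpen_Ioo x hx) (hwc.continuousAt (isOpen_Ioo.mem_nhds hx))

lemma integral_pos_of_mem_Ioc {x : ℝ} (hw : IntervalIntegrable w volume l r)
    (hw0 : ∀ t ∈ Ioo l r, 0 < w t) (hx : x ∈ Ioc l r) : 0 < ∫ t in l..x, w t :=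
  intervalIntegral.intervalIntegral_pos_of_pos_on
    (hw.mono_set (uIcc_subset_uIcc_left (Icc_subset_uIcc ⟨hx.1.le, hx.2⟩)))
    (fun t ht => hw0 t ⟨ht.1, ht.2.trans_le hx.2⟩) hx.1

lemma isBigO_integral_nhdsGT_zero {g : ℝ → ℝ} (hg : MonotoneOn g (Ioi 0))
    (hg0 : ∀ s > 0, 0 ≤ g s) (hwg : w =O[𝓝[>] 0] g) :
    (fun s => ∫ t in (0 : ℝ)..s, w t) =O[𝓝[>] 0] fun s => s * g s := by
  obtain ⟨c, hc, hwc⟩ := hwg.exists_pos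
  obtain ⟨δ, hδ, hwδ⟩ := mem_nhdsGT_iff_exists_Ioo_subset.1 hwc.bound
  refine IsBigO.of_bound c ?_
  filter_upwards [Ioo_mem_nhdsGT hδ] with s hs
  have hws : ∀ t ∈ Ι 0 s, ‖w t‖ ≤ c * g s := by
    intro t ht
    rw [uIoc_of_le hs.1.le] at ht
    calc ‖w t‖ ≤ c * ‖g t‖ := hwδ ⟨ht.1, ht.2.trans_lt hs.2⟩
      _ = c * g t := by rw [norm_of_nonneg (hg0 t ht.1)]
      _ ≤ c * g s := by gcongr; exact hg ht.1 hs.1 ht.2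
  calc ‖∫ t in (0 : ℝ)..s, w t‖ ≤ c * g s * |s - 0| :=
        intervalIntegral.norm_integral_le_of_norm_le_const hws
    _ = c * ‖s * g s‖ := by
        rw [norm_of_nonneg (mul_nonneg hs.1.le (hg0 s hs.1)), sub_zero, abs_of_pos hs.1]
        ring

lemma tendsto_integral_div_nhdsGT_zero {g : ℝ → ℝ} (hg : MonotoneOn g (Ioi 0))
    (hg0 : ∀ s > 0, 0 ≤ g s) (hwg : w =Θ[𝓝[>] 0] g) :
    Tendsto (fun s => (∫ t in (0 : ℝ)..s, w t) / w s) (𝓝[>] 0) (𝓝 0) := by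
  have hA : (fun s => ∫ t in (0 : ℝ)..s, w t) =O[𝓝[>] 0] fun s => s * w s :=
    (isBigO_integral_nhdsGT_zero hg hg0 hwg.isBigO).trans
      ((isBigO_refl _ _).mul hwg.isBigO_symm)
  have hAw : (fun s => (∫ t in (0 : ℝ)..s, w t) / w s) =O[𝓝[>] 0] fun s => s := by
    obtain ⟨c, hc, hAc⟩ := hA.exists_pos
    refine IsBigO.of_bound c (hAc.bound.mono fun s hs => ?_)
    rw [norm_div]
    exact div_le_of_le_mul₀ (norm_nonneg _) (by positivity) (by rwa [mul_assoc, ← norm_mul])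
  exact hAw.trans_tendsto (tendsto_id.mono_left nhdsWithin_le_nhds)

lemma intervalIntegrable_integral_div {g : ℝ → ℝ} (hr : 0 ≤ r) (hg : MonotoneOn g (Ioi 0))
    (hg0 : ∀ s > 0, 0 ≤ g s) (hwg : w =Θ[𝓝[>] 0] g) (hw : ContinuousOn w (Icc 0 r))
    (hw0 : ∀ s ∈ Ioc 0 r, w s ≠ 0) :
    IntervalIntegrable (fun s => (∫ t in (0 : ℝ)..s, w t) / w s) volume 0 r := by
  refine ContinuousOn.intervalIntegrable_of_Icc hr fun s hs => ?_
  rcases hs.1.eq_or_lt with rfl | hs0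
  · refine (continuousWithinAt_Ioi_iff_Ici.1 ?_).mono Icc_subset_Ici_self
    simpa only [ContinuousWithinAt, intervalIntegral.integral_same, zero_div] using
      tendsto_integral_div_nhdsGT_zero hg hg0 hwg
  · exact (continuousOn_integral_Icc hr (hw.intervalIntegrable_of_Icc hr) s hs).div (hw s hs)
      (hw0 s ⟨hs0, hs.2⟩)

lemma isTheta_sub_of_hasDerivWithinAt {𝕜 F : Type*} [NontriviallyNormedField 𝕜]
    [NormedAddCommGroup F] [NormedSpace 𝕜 F] {f : 𝕜 → F} {f' : F} {s : Set 𝕜} {x : 𝕜}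
    (hf : HasDerivWithinAt f f' s x) (hf' : f' ≠ 0) :
    (fun y => f y - f x) =Θ[𝓝[s] x] fun y => y - x := by
  have hpair : Tendsto (fun y => (y, x)) (𝓝[s] x) (𝓝[s] x ×ˢ pure x) :=
    tendsto_id.prodMk tendsto_const_pure
  have h := HasDerivAtFilter.isTheta_sub hf hf'
  exact ⟨h.isBigO.comp_tendsto hpair, h.isBigO_symm.comp_tendsto hpair⟩

lemma intervalIntegrable_integral_pow_div {ψ : ℝ → ℝ} {ψ' : ℝ} (hr : 0 ≤ r) (hψ0 : ψ 0 = 0)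
    (hψ : HasDerivWithinAt ψ ψ' (Ioi 0) 0) (hψ' : ψ' ≠ 0) (hψc : ContinuousOn ψ (Icc 0 r))
    (hψne : ∀ s ∈ Ioc 0 r, ψ s ≠ 0) (n : ℕ) :
    IntervalIntegrable (fun s => (∫ t in (0 : ℝ)..s, ψ t ^ n) / ψ s ^ n) volume 0 r := by
  have hψΘ : ψ =Θ[𝓝[>] 0] fun s => s := by
    simpa only [hψ0, sub_zero] using isTheta_sub_of_hasDerivWithinAt hψ hψ'
  exact intervalIntegrable_integral_div hr
    (fun _ hs _ _ hst => pow_le_pow_left₀ (le_of_lt hs) hst n)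
    (fun _ hs => pow_nonneg (le_of_lt hs) n) (hψΘ.pow n) (hψc.pow n)
    fun s hs => pow_ne_zero n (hψne s hs)

lemma rpow_mul_add_rpow_mul_le {K q v a C : ℝ} (hK : 0 < K) (hv : 0 ≤ v) (ha : 0 ≤ a)
    (hq : q ^ 2 ≤ C * K) :
    q * a * K ^ (a - 1) * (v * q) + K ^ a * v ≤ (1 + C * a) * (v * K ^ a) := by
  have hKa : K ^ a = K ^ (a - 1) * K := by rw [rpow_sub_one hK.ne', div_mul_cancel₀ _ hK.ne']
  calc q * a * K ^ (a - 1) * (v * q) + K ^ a * v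
      = a * v * K ^ (a - 1) * q ^ 2 + K ^ a * v := by ring
    _ ≤ a * v * K ^ (a - 1) * (C * K) + K ^ a * v := by gcongr
    _ = (1 + C * a) * (v * K ^ a) := by rw [hKa]; ring

lemma rpow_mul_le_integral_of_sq_deriv_le {A H h : ℝ → ℝ} {a C : ℝ} (hlr : l ≤ r) (ha : 0 ≤ a)
    (hw : IntervalIntegrable w volume l r) (hw0 : ∀ x ∈ Ioo l r, 0 ≤ w x)
    (hA : ContinuousOn A (Icc l r)) (hA' : ∀ x ∈ Ioo l r, HasDerivAt A (w x) x) (hAl : A l = 0)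
    (hH : ContinuousOn H (Icc l r)) (hH' : ∀ x ∈ Ioo l r, HasDerivAt H (h x) x)
    (hH0 : ∀ x ∈ Ioo l r, 0 < H x) (hAh : ∀ x ∈ Ioo l r, A x = w x * h x)
    (hC : ∀ x ∈ Ioo l r, h x ^ 2 ≤ C * H x) :
    H r ^ a * A r ≤ (1 + C * a) * ∫ x in l..r, w x * H x ^ a := by
  have hHa : ContinuousOn (fun x => H x ^ a) (Icc l r) := hH.rpow_const fun _ _ => Or.inr ha
  have hint : IntervalIntegrable (fun x => (1 + C * a) * (w x * H x ^ a)) volume l r :=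
    (hw.mul_continuousOn (by rwa [uIcc_of_le hlr])).const_mul _
  have hderiv : ∀ x ∈ Ioo l r, HasDerivAt (fun x => H x ^ a * A x)
      (h x * a * H x ^ (a - 1) * A x + H x ^ a * w x) x := fun x hx =>
    ((hH' x hx).rpow_const (Or.inl (hH0 x hx).ne')).mul (hA' x hx)
  have hderiv_le : ∀ x ∈ Ioo l r, h x * a * H x ^ (a - 1) * A x + H x ^ a * w x
      ≤ (1 + C * a) * (w x * H x ^ a) := fun x hx => by
    rw [hAh x hx]
    exact rpow_mul_add_rpow_mul_le (hH0 x hx) (hw0 x hx) ha (hC x hx)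
  have hsub := intervalIntegral.sub_le_integral_of_hasDeriv_right_of_le hlr (hHa.mul hA)
    (fun x hx => (hderiv x hx).hasDerivWithinAt)
    ((intervalIntegrable_iff_integrableOn_Icc_of_le hlr).1 hint) hderiv_le
  simpa only [Pi.mul_apply, hAl, mul_zero, sub_zero, intervalIntegral.integral_const_mul] using hsub

/-- The function `H` with `H 0 = 0` and `H' = w⁻¹ ∫₀ w` attached to a weight `w`, that is, the
radial solution of `w⁻¹ (w H')' = 1`. `Hfun N ψ` is, definitionally, the case
`w = fun s => ψ s ^ (N - 1)`. -/
noncomputable def torsionProfile (w : ℝ → ℝ) (r : ℝ) : ℝ :=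
  ∫ s in (0 : ℝ)..r, (∫ t in (0 : ℝ)..s, w t) / w s

section TorsionProfile

variable (hw : IntervalIntegrable w volume 0 r) (hwc : ContinuousOn w (Ioo 0 r))
  (hw0 : ∀ x ∈ Ioo 0 r, 0 < w x)
  (hint : IntervalIntegrable (fun s => (∫ t in (0 : ℝ)..s, w t) / w s) volume 0 r)
include hw hw0 hint

lemma torsionProfile_pos {x : ℝ} (hx : x ∈ Ioc 0 r) : 0 < torsionProfile w x :=
  integral_pos_of_mem_Ioc hint
    (fun s hs => div_pos (integral_pos_of_mem_Ioc hw hw0 ⟨hs.1, hs.2.le⟩) (hw0 s hs)) hx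

include hwc

lemma hasDerivAt_torsionProfile {x : ℝ} (hx : x ∈ Ioo 0 r) :
    HasDerivAt (torsionProfile w) ((∫ t in (0 : ℝ)..x, w t) / w x) x := by
  refine hasDerivAt_integral_of_continuousOn_Ioo hint (ContinuousOn.div ?_ hwc ?_) hx
  · exact fun s hs =>
      (hasDerivAt_integral_of_continuousOn_Ioo hw hwc hs).continuousAt.continuousWithinAt
  · exact fun s hs => (hw0 s hs).ne'

lemma rpow_torsionProfile_mul_integral_le {C a : ℝ} (hr : 0 ≤ r) (ha : 0 ≤ a)
    (hH : ∀ x ∈ Ioo 0 r, deriv (torsionProfile w) x ^ 2 ≤ C * torsionProfile w x) :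
    torsionProfile w r ^ a * (∫ s in (0 : ℝ)..r, w s)
      ≤ (1 + C * a) * ∫ s in (0 : ℝ)..r, w s * torsionProfile w s ^ a := by
  have hderiv : ∀ x ∈ Ioo 0 r, HasDerivAt (torsionProfile w) _ x := fun x hx =>
    hasDerivAt_torsionProfile hw hwc hw0 hint hx
  exact rpow_mul_le_integral_of_sq_deriv_le hr ha hw (fun x hx => (hw0 x hx).le)
    (continuousOn_integral_Icc hr hw)
    (fun x hx => hasDerivAt_integral_of_continuousOn_Ioo hw hwc hx) intervalIntegral.integral_same
    (continuousOn_integral_Icc hr hint) hderiv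
    (fun x hx => torsionProfile_pos hw hw0 hint (Ioo_subset_Ioc_self hx))
    (fun x hx => (mul_div_cancel₀ _ (hw0 x hx).ne').symm)
    (fun x hx => (hderiv x hx).deriv ▸ hH x hx)

end TorsionProfile

end Weight

lemma sub_one_div_add_one_le_div_add_two_mul {m p : ℝ} (hm : 1 < m) (hp : 0 ≤ p)
    (hpm : p ≤ m / (m - 1)) : (m - 1) / (m + 1) ≤ m / (m + 2 * p) := by
  have hpm' : p * (m - 1) ≤ m := (le_div_iff₀ (by linarith)).1 hpm
  rw [div_le_div_iff₀ (by linarith) (by linarith)]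
  linarith

theorem statement3_general {w : ℝ → ℝ} {C m p r κ : ℝ} (hm : 0 < m) (hp : 0 ≤ p) (hr : 0 < r)
    (hw : IntervalIntegrable w volume 0 r) (hwc : ContinuousOn w (Ioo 0 r))
    (hw0 : ∀ x ∈ Ioo 0 r, 0 < w x)
    (hint : IntervalIntegrable (fun s => (∫ t in (0 : ℝ)..s, w t) / w s) volume 0 r)
    (hH : ∀ x ∈ Ioo 0 r, deriv (torsionProfile w) x ^ 2 ≤ C * torsionProfile w x)
    (hκ : κ ≤ m / (m + C * p)) :
    κ * torsionProfile w r ^ (p / m) * (∫ s in (0 : ℝ)..r, w s)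
      ≤ ∫ s in (0 : ℝ)..r, w s * torsionProfile w s ^ (p / m) := by
  have hpos : ∀ x ∈ Ioc 0 r, 0 < torsionProfile w x := fun x hx =>
    torsionProfile_pos hw hw0 hint hx
  have hC : 0 ≤ C := by
    have hmem : r / 2 ∈ Ioo 0 r := ⟨half_pos hr, half_lt_self hr⟩
    exact nonneg_of_mul_nonneg_left ((sq_nonneg _).trans (hH _ hmem))
      (hpos _ (Ioo_subset_Ioc_self hmem))
  have hVr : 0 < ∫ s in (0 : ℝ)..r, w s := integral_pos_of_mem_Ioc hw hw0 (right_mem_Ioc.2 hr)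
  have hHr : 0 < torsionProfile w r := hpos r (right_mem_Ioc.2 hr)
  have hcoeff : m / (m + C * p) = (1 + C * (p / m))⁻¹ := by field_simp
  calc κ * torsionProfile w r ^ (p / m) * (∫ s in (0 : ℝ)..r, w s)
      ≤ (1 + C * (p / m))⁻¹ * torsionProfile w r ^ (p / m) * (∫ s in (0 : ℝ)..r, w s) := by
        gcongr
        exact hκ.trans_eq hcoeff
    _ ≤ ∫ s in (0 : ℝ)..r, w s * torsionProfile w s ^ (p / m) := by
        rw [mul_assoc, inv_mul_le_iff₀ (by positivity)]
        exact rpow_torsionProfile_mul_integral_le hw hwc hw0 hint hr.le (div_nonneg hp hm.le) hH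

/-- Integration-by-parts estimate: if `(H')² ≤ 2H`, then for `0 < p ≤ m/(m-1)` and `r > 0`,
`∫₀^r ψ^{N-1} H^{p/m} ds ≥ (m/(m+2p)) H(r)^{p/m} ∫₀^r ψ^{N-1} ds`, and in particular the
left-hand side is at least `((m-1)/(m+1)) H(r)^{p/m} ∫₀^r ψ^{N-1} ds`. -/
theorem statement3 (m : ℝ) (hm : 1 < m) (N : ℕ) (hN : 2 ≤ N) (ψ : ℝ → ℝ)
    (hsmooth : ContDiffOn ℝ (⊤ : ℕ∞) ψ (Ici 0))
    (hψ0 : ψ 0 = 0) (hψ'0 : deriv ψ 0 = 1)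
    (hψpos : ∀ r > (0:ℝ), 0 < ψ r)
    (hH2 : ∀ r ≥ (0:ℝ), (deriv (Hfun N ψ) r) ^ 2 ≤ 2 * Hfun N ψ r) :
    ∀ p : ℝ, 0 < p → p ≤ m/(m-1) → ∀ r > (0:ℝ),
      (m/(m+2*p)) * Hfun N ψ r ^ (p/m) * (∫ s in (0:ℝ)..r, ψ s ^ (N - 1))
        ≤ (∫ s in (0:ℝ)..r, ψ s ^ (N - 1) * Hfun N ψ s ^ (p/m)) ∧
      ((m-1)/(m+1)) * Hfun N ψ r ^ (p/m) * (∫ s in (0:ℝ)..r, ψ s ^ (N - 1))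
        ≤ (∫ s in (0:ℝ)..r, ψ s ^ (N - 1) * Hfun N ψ s ^ (p/m)) := by
  intro p hp hpm r hr
  have hψc : ContinuousOn ψ (Icc 0 r) := hsmooth.continuousOn.mono Icc_subset_Ici_self
  have hψ' : HasDerivAt ψ 1 0 :=
    hψ'0 ▸ (differentiableAt_of_deriv_ne_zero (by simp [hψ'0])).hasDerivAt
  have hint := intervalIntegrable_integral_pow_div hr.le hψ0 hψ'.hasDerivWithinAt one_ne_zero hψc
    (fun s hs => (hψpos s hs.1).ne') (N - 1)
  have bound {κ : ℝ} (hκ : κ ≤ m / (m + 2 * p)) :=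
    statement3_general (one_pos.trans hm) hp.le hr
      ((hψc.pow (N - 1)).intervalIntegrable_of_Icc hr.le) ((hψc.pow _).mono Ioo_subset_Icc_self)
      (fun x hx => pow_pos (hψpos x hx.1) _) hint (fun x hx => hH2 x hx.1.le) hκ
  exact ⟨bound le_rfl, bound (sub_one_div_add_one_le_div_add_two_mul hm hp.le hpm)⟩
end

section
/- Let N ≥ 2 be an integer and let ψ be a Cartan-Hadamard model function (so ψ'' ≥ 0 and ψ' ≥ 1). Then (N-1) ψ'(r) ∫₀^r ψ(s)^{N-1} ds ≥ ψ(r)^N / 2 for every r > 0; equivalently, (N-1)(ψ'(r)/ψ(r)) H'(r) ≥ 1/2 for every r > 0, where H is the associated function. Consequently H''(r) ≤ 1/2 for every r > 0. -/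
open Real MeasureTheory Set Filter

/-!
Since `ψ'` is nondecreasing, `(ψ ^ N)' = N ψ' ψ ^ (N - 1) ≤ N ψ'(r) ψ ^ (N - 1)` on `[0, r]`, and
integrating gives `ψ(r) ^ N / N ≤ ψ'(r) ∫₀^r ψ ^ (N - 1)`, with equality in the Euclidean case
`ψ(r) = r`. As `H' = (∫₀^r ψ ^ (N - 1)) / ψ(r) ^ (N - 1)`, this says `(ψ' / ψ) H' ≥ 1 / N`, and
the identity `H'' = 1 - (N - 1) (ψ' / ψ) H'` yields `H'' ≤ 1 / N`.
-/

open scoped Topology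

theorem hasDerivAt_integral_of_continuousOn_Ici {E : Type*} [NormedAddCommGroup E]
    [NormedSpace ℝ E] [CompleteSpace E] {f : ℝ → E} {a x : ℝ} (hf : ContinuousOn f (Ici a))
    (hx : a < x) : HasDerivAt (fun u ↦ ∫ t in a..u, f t) (f x) x :=
  intervalIntegral.integral_hasDerivAt_right
    ((hf.mono Icc_subset_Ici_self).intervalIntegrable_of_Icc hx.le)
    ((hf.mono Ioi_subset_Ici_self).stronglyMeasurableAtFilter isOpen_Ioi x hx)
    (hf.continuousAt (Ici_mem_nhds hx))

theorem continuousWithinAt_Ici_of_mem_Icc_mul_sub {f : ℝ → ℝ} {a C : ℝ}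
    (hf : ∀ᶠ x in 𝓝[≥] a, f x ∈ Icc 0 (C * (x - a))) : ContinuousWithinAt f (Ici a) a := by
  have hfa : f a = 0 := by simpa using hf.self_of_nhdsWithin self_mem_Ici
  have hlinear : Tendsto (fun x ↦ C * (x - a)) (𝓝[≥] a) (𝓝 0) := by
    have : Continuous fun x ↦ C * (x - a) := by fun_prop
    simpa using (this.tendsto a).mono_left nhdsWithin_le_nhds
  rw [ContinuousWithinAt, hfa]
  exact squeeze_zero' (hf.mono fun _ h ↦ h.1) (hf.mono fun _ h ↦ h.2) hlinear

theorem integral_div_mem_Icc_of_monotoneOn {f : ℝ → ℝ} {a s : ℝ} (has : a ≤ s)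
    (hmono : MonotoneOn f (Icc a s)) (hfa : 0 ≤ f a) :
    (∫ t in a..s, f t) / f s ∈ Icc 0 (s - a) := by
  have hnonneg : ∀ t ∈ Icc a s, 0 ≤ f t := fun t ht ↦
    hfa.trans (hmono (left_mem_Icc.2 has) ht ht.1)
  have hfs : 0 ≤ f s := hnonneg s (right_mem_Icc.2 has)
  have hint : IntervalIntegrable f volume a s :=
    MonotoneOn.intervalIntegrable (by rwa [uIcc_of_le has])
  have hle : ∫ t in a..s, f t ≤ (s - a) * f s := by
    simpa using intervalIntegral.integral_mono_on has hint intervalIntegrable_const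
      fun t ht ↦ hmono ht (right_mem_Icc.2 has) ht.2
  exact ⟨div_nonneg (intervalIntegral.integral_nonneg has hnonneg) hfs,
    div_le_of_le_mul₀ hfs (sub_nonneg.2 has) hle⟩

theorem continuousOn_integral_div_of_monotoneOn {f : ℝ → ℝ} {a : ℝ} (hcont : ContinuousOn f (Ici a))
    (hmono : MonotoneOn f (Ici a)) (hfa : 0 ≤ f a) (hpos : ∀ x > a, 0 < f x) :
    ContinuousOn (fun s ↦ (∫ t in a..s, f t) / f s) (Ici a) := by
  intro s hs
  rcases eq_or_lt_of_le (mem_Ici.1 hs) with rfl | has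
  · -- Whether or not `f a = 0`, the quotient is `0` at `a`, so the linear bound gives continuity.
    refine continuousWithinAt_Ici_of_mem_Icc_mul_sub (C := 1) ?_
    filter_upwards [self_mem_nhdsWithin] with x hx
    simpa using integral_div_mem_Icc_of_monotoneOn hx (hmono.mono Icc_subset_Ici_self) hfa
  · exact ((hasDerivAt_integral_of_continuousOn_Ici hcont has).continuousAt.div
      (hcont.continuousAt (Ici_mem_nhds has)) (hpos s has).ne').continuousWithinAt

theorem pow_succ_sub_pow_succ_div_le_mul_integral_pow {f : ℝ → ℝ} {a b K : ℝ} (n : ℕ)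
    (hab : a ≤ b) (hcont : ContinuousOn f (Icc a b))
    (hdiff : ∀ x ∈ Ioo a b, DifferentiableAt ℝ f x) (hnonneg : ∀ x ∈ Ioo a b, 0 ≤ f x)
    (hderiv : ∀ x ∈ Ioo a b, deriv f x ≤ K) :
    (f b ^ (n + 1) - f a ^ (n + 1)) / (n + 1) ≤ K * ∫ t in a..b, f t ^ n := by
  have hpow : ∀ x ∈ Ioo a b,
      HasDerivAt (fun t ↦ f t ^ (n + 1) / (n + 1)) (f x ^ n * deriv f x) x := fun x hx ↦ by
    refine (((hdiff x hx).hasDerivAt.fun_pow (n + 1)).div_const ((n : ℝ) + 1)).congr_deriv ?_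
    rw [Nat.add_sub_cancel]
    push_cast
    field_simp
  rw [sub_div, ← intervalIntegral.integral_const_mul]
  refine intervalIntegral.sub_le_integral_of_hasDeriv_right_of_le hab
    ((hcont.pow _).div_const _) (fun x hx ↦ (hpow x hx).hasDerivWithinAt)
    (continuousOn_const.mul (hcont.pow n)).integrableOn_Icc fun x hx ↦ ?_
  rw [mul_comm]
  exact mul_le_mul_of_nonneg_right (hderiv x hx) (pow_nonneg (hnonneg x hx) n)

/-- A convex model function: the part of the notion of a Cartan-Hadamard model function that does
not involve derivatives. Neither smoothness nor the normalization `ψ' 0 = 1` is included; where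
differentiability on `(0, ∞)` matters, it is a separate assumption. -/
structure IsConvexModel (ψ : ℝ → ℝ) : Prop where
  convexOn : ConvexOn ℝ (Ici 0) ψ
  map_zero : ψ 0 = 0
  pos : ∀ r > 0, 0 < ψ r

namespace IsConvexModel

variable {ψ : ℝ → ℝ} {r : ℝ}

theorem nonneg (hψ : IsConvexModel ψ) (hr : 0 ≤ r) : 0 ≤ ψ r := by
  rcases hr.eq_or_lt with rfl | hr
  · exact hψ.map_zero.ge
  · exact (hψ.pos r hr).le

theorem monotoneOn (hψ : IsConvexModel ψ) : MonotoneOn ψ (Ici 0) := by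
  intro x hx y hy hxy
  rcases eq_or_lt_of_le (mem_Ici.1 hx) with rfl | hx
  · exact hψ.map_zero.le.trans (hψ.nonneg hy)
  · exact hψ.convexOn.le_right_of_left_le'' self_mem_Ici hy hx hxy
      (hψ.map_zero.le.trans (hψ.pos x hx).le)

theorem continuousOn (hψ : IsConvexModel ψ) : ContinuousOn ψ (Ici 0) := by
  refine hψ.convexOn.continuousOn_Ici (continuousWithinAt_Ici_of_mem_Icc_mul_sub (C := ψ 1) ?_)
  filter_upwards [Icc_mem_nhdsGE zero_lt_one] with x hx
  have hchord := hψ.convexOn.2 self_mem_Ici (mem_Ici.2 zero_le_one) (sub_nonneg.2 hx.2) hx.1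
    (sub_add_cancel 1 x)
  refine ⟨hψ.nonneg hx.1, ?_⟩
  simpa [hψ.map_zero, mul_comm] using hchord

theorem pow_succ_div_le_deriv_mul_integral_pow (hψ : IsConvexModel ψ)
    (hdiff : DifferentiableOn ℝ ψ (Ioi 0)) (n : ℕ) (hr : 0 < r) :
    ψ r ^ (n + 1) / (n + 1) ≤ deriv ψ r * ∫ s in 0..r, ψ s ^ n := by
  have hdiffAt : ∀ x ∈ Ioi (0 : ℝ), DifferentiableAt ℝ ψ x := fun x hx ↦
    hdiff.differentiableAt (Ioi_mem_nhds hx)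
  have hderiv_mono : MonotoneOn (deriv ψ) (Ioi 0) :=
    (hψ.convexOn.subset Ioi_subset_Ici_self (convex_Ioi 0)).monotoneOn_deriv hdiffAt
  simpa [hψ.map_zero] using pow_succ_sub_pow_succ_div_le_mul_integral_pow n hr.le
    (hψ.continuousOn.mono Icc_subset_Ici_self) (fun x hx ↦ hdiffAt x hx.1)
    (fun x hx ↦ hψ.nonneg hx.1.le) fun x hx ↦ hderiv_mono hx.1 hr hx.2.le

theorem hasDerivAt_integral_pow (hψ : IsConvexModel ψ) (n : ℕ) (hr : 0 < r) :
    HasDerivAt (fun s ↦ ∫ t in 0..s, ψ t ^ n) (ψ r ^ n) r :=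
  hasDerivAt_integral_of_continuousOn_Ici (hψ.continuousOn.pow n) hr

theorem deriv_Hfun (hψ : IsConvexModel ψ) (N : ℕ) (hr : 0 < r) :
    deriv (Hfun N ψ) r = (∫ t in 0..r, ψ t ^ (N - 1)) / ψ r ^ (N - 1) := by
  have hmono : MonotoneOn (fun t ↦ ψ t ^ (N - 1)) (Ici 0) := fun x hx y hy hxy ↦
    pow_le_pow_left₀ (hψ.nonneg hx) (hψ.monotoneOn hx hy hxy) _
  exact (hasDerivAt_integral_of_continuousOn_Ici
    (continuousOn_integral_div_of_monotoneOn (hψ.continuousOn.pow _) hmono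
      (pow_nonneg (hψ.nonneg le_rfl) _) fun x hx ↦ pow_pos (hψ.pos x hx) _) hr).deriv

theorem deriv_deriv_Hfun (hψ : IsConvexModel ψ) (n : ℕ) (hr : 0 < r)
    (hdiff : DifferentiableAt ℝ ψ r) :
    deriv (deriv (Hfun (n + 1) ψ)) r = 1 - n * (deriv ψ r / ψ r) * deriv (Hfun (n + 1) ψ) r := by
  have hψr : ψ r ≠ 0 := (hψ.pos r hr).ne'
  have hderiv : deriv (Hfun (n + 1) ψ) =ᶠ[𝓝 r] fun s ↦ (∫ t in 0..s, ψ t ^ n) / ψ s ^ n := by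
    filter_upwards [Ioi_mem_nhds hr] with s hs using hψ.deriv_Hfun (n + 1) hs
  have hquot := (hψ.hasDerivAt_integral_pow n hr).fun_div (hdiff.hasDerivAt.fun_pow n)
    (pow_ne_zero n hψr)
  rw [hderiv.deriv_eq, hquot.deriv, hderiv.eq_of_nhds]
  rcases n with _ | n
  · simp
  · rw [Nat.add_sub_cancel]
    field_simp
    ring

theorem one_div_le_deriv_div_mul_deriv_Hfun (hψ : IsConvexModel ψ)
    (hdiff : DifferentiableOn ℝ ψ (Ioi 0)) (n : ℕ) (hr : 0 < r) :
    1 / ((n : ℝ) + 1) ≤ deriv ψ r / ψ r * deriv (Hfun (n + 1) ψ) r := by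
  have hpow : 0 < ψ r ^ (n + 1) := pow_pos (hψ.pos r hr) _
  calc 1 / ((n : ℝ) + 1) = ψ r ^ (n + 1) / (n + 1) / ψ r ^ (n + 1) := by field_simp
    _ ≤ (deriv ψ r * ∫ s in 0..r, ψ s ^ n) / ψ r ^ (n + 1) := by
      gcongr
      exact hψ.pow_succ_div_le_deriv_mul_integral_pow hdiff n hr
    _ = deriv ψ r / ψ r * deriv (Hfun (n + 1) ψ) r := by
      rw [hψ.deriv_Hfun (n + 1) hr, Nat.add_sub_cancel, pow_succ', div_mul_div_comm]

end IsConvexModel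

theorem statement8_general (N : ℕ) (hN : 1 ≤ N) (ψ : ℝ → ℝ) (hψ : IsConvexModel ψ)
    (hdiff : DifferentiableOn ℝ ψ (Ioi 0)) :
    ∀ r > (0 : ℝ),
      (1 - 1 / (N : ℝ)) * ψ r ^ N ≤
        ((N : ℝ) - 1) * deriv ψ r * (∫ s in (0 : ℝ)..r, ψ s ^ (N - 1)) ∧
      1 - 1 / (N : ℝ) ≤ ((N : ℝ) - 1) * (deriv ψ r / ψ r) * deriv (Hfun N ψ) r ∧
      deriv (deriv (Hfun N ψ)) r ≤ 1 / (N : ℝ) := by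
  intro r hr
  obtain ⟨n, rfl⟩ := Nat.exists_eq_add_of_le' hN
  have hconst : 1 - 1 / ((n : ℝ) + 1) = n * (1 / ((n : ℝ) + 1)) := by field_simp; ring
  have hvolume := mul_le_mul_of_nonneg_left
    (hψ.pow_succ_div_le_deriv_mul_integral_pow hdiff n hr) n.cast_nonneg
  have hlogDeriv := mul_le_mul_of_nonneg_left
    (hψ.one_div_le_deriv_div_mul_deriv_Hfun hdiff n hr) n.cast_nonneg
  rw [hψ.deriv_deriv_Hfun n hr (hdiff.differentiableAt (Ioi_mem_nhds hr))]
  push_cast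
  rw [add_sub_cancel_right, mul_assoc, mul_assoc, hconst]
  exact ⟨by rwa [mul_assoc, one_div_mul_eq_div], hlogDeriv, by linarith⟩

/-- For a Cartan-Hadamard model function `ψ` (convex, so `ψ'' ≥ 0`, `ψ' ≥ 1`):
`(N-1) ψ'(r) ∫₀^r ψ^{N-1} ≥ ψ(r)^N / 2`, equivalently `(N-1)(ψ'/ψ) H' ≥ 1/2`, and
consequently `H'' ≤ 1/2`, for every `r > 0`. -/
theorem statement8 (N : ℕ) (hN : 2 ≤ N) (ψ : ℝ → ℝ)
    (hsmooth : ContDiffOn ℝ (⊤ : ℕ∞) ψ (Ici 0))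
    (hψ0 : ψ 0 = 0) (hψ'0 : deriv ψ 0 = 1)
    (hψpos : ∀ r > (0:ℝ), 0 < ψ r)
    (hconv : ConvexOn ℝ (Ici 0) ψ) :
    ∀ r > (0:ℝ),
      ψ r ^ N / 2 ≤ ((N:ℝ) - 1) * deriv ψ r * (∫ s in (0:ℝ)..r, ψ s ^ (N - 1)) ∧
      (1:ℝ)/2 ≤ ((N:ℝ) - 1) * (deriv ψ r / ψ r) * deriv (Hfun N ψ) r ∧
      deriv (deriv (Hfun N ψ)) r ≤ 1/2 := by
  have hdiff : DifferentiableOn ℝ ψ (Ioi 0) :=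
    (hsmooth.differentiableOn (by simp)).mono Ioi_subset_Ici_self
  have hN_inv : 1 / (N : ℝ) ≤ 1 / 2 := one_div_le_one_div_of_le two_pos (mod_cast hN)
  intro r hr
  obtain ⟨hvolume, hlogDeriv, hH⟩ :=
    statement8_general N (by omega) ψ ⟨hconv, hψ0, hψpos⟩ hdiff r hr
  exact ⟨by nlinarith [pow_pos (hψpos r hr) N], by linarith, by linarith⟩
end

section
/- Let ψ: [2,∞) → ℝ be a C² function with ψ(r) ≥ 1, ψ'(r) > 0 and ψ''(r) ≥ 0 for all r ≥ 2. Set θ(r) := log ψ(r) and B(r) := (ψ(r)/ψ'(r))² log ψ(r). Let T > 0, K > 0, C₂ > 0 and λ > 0 satisfy 2T + K ≤ 1/C₂, and let a: [2,∞) × (0,T) → ℝ and μ: [2,∞) × (0,T) → ℝ be functions with 0 ≤ a(r,t) ≤ C₂ B(r) and μ(r,t) ≥ 0 for all (r,t). Then the function η(r,t) := λ exp(-K θ(r)/(2T - t)) satisfies ∂_t η(r,t) + a(r,t)·(∂²_r η(r,t) + μ(r,t) ∂_r η(r,t)) ≤ 0 for every (r,t) ∈ [2,∞) × (0,T). -/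
open Real MeasureTheory Set Filter

/-!
Write `θ = log ψ` and `p = K / (2T - t)`, so that `η = λ exp (-p θ)` and
`η_t + a (η_rr + μ η_r) = p η (-θ / (2T - t) + a (p θ'² - θ'' - μ θ'))`.
Convexity of `ψ` reads `θ'' ≥ -θ'²`, and `a ≤ C₂ B` reads `a θ'² ≤ C₂ θ`. Hence the last factor is
at most `θ (C₂ (p + 1) - 1 / (2T - t))`, which is nonpositive as soon as `C₂ (2T - t + K) ≤ 1`.

At the endpoint `r = 2` the smoothness of `ψ` is only one-sided, while `deriv` is two-sided and
takes the junk value `0` if `deriv ψ` or `deriv η` is not differentiable there. Second derivatives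
are therefore computed within `[2, ∞)`; the two-sided one, when it is not `0`, agrees with them.
-/

section OneSidedDerivatives

variable {f : ℝ → ℝ} {f' f'' x : ℝ} {s : Set ℝ}

lemma deriv_eq_or_eq_zero_of_hasDerivWithinAt (hs : UniqueDiffWithinAt ℝ s x)
    (hf : HasDerivWithinAt f f' s x) : deriv f x = f' ∨ deriv f x = 0 := by
  by_cases hd : DifferentiableAt ℝ f x
  · exact .inl ((hd.derivWithin hs).symm.trans (hf.derivWithin hs))
  · exact .inr (deriv_zero_of_not_differentiableAt hd)

lemma differentiableOn_deriv_of_contDiffOn_two (hs : UniqueDiffOn ℝ s) (hf : ContDiffOn ℝ 2 f s)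
    (hd : ∀ y ∈ s, DifferentiableAt ℝ f y) : DifferentiableOn ℝ (deriv f) s :=
  ((hf.derivWithin hs (m := 1) (by norm_num)).differentiableOn one_ne_zero).congr
    fun y hy => ((hd y hy).derivWithin (hs y hy)).symm

lemma derivWithin_nonneg_of_deriv_nonneg_interior (hs : Convex ℝ s) (hf : DifferentiableOn ℝ f s)
    (hf' : ∀ y ∈ interior s, 0 ≤ deriv f y) : 0 ≤ derivWithin f s x :=
  (monotoneOn_of_deriv_nonneg hs hf.continuousOn (hf.mono interior_subset) hf').derivWithin_nonneg

lemma hasDerivWithinAt_deriv_log_comp (hd : ∀ y ∈ s, DifferentiableAt ℝ f y)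
    (h0 : ∀ y ∈ s, f y ≠ 0) (hx : x ∈ s) (hf' : HasDerivWithinAt (deriv f) f'' s x) :
    HasDerivWithinAt (deriv fun y => log (f y)) (f'' / f x - (deriv f x / f x) ^ 2) s x := by
  have hquot := hf'.fun_div (hd x hx).hasDerivAt.hasDerivWithinAt (h0 x hx)
  have hlog : ∀ y ∈ s, deriv (fun y => log (f y)) y = deriv f y / f y :=
    fun y hy => deriv.log (hd y hy) (h0 y hy)
  refine (hquot.congr hlog (hlog x hx)).congr_deriv ?_
  have := h0 x hx
  field_simp

end OneSidedDerivatives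

lemma mul_div_sq_le_of_le_mul_div_sq {a b c x y : ℝ} (hx : 0 < x) (hy : 0 < y)
    (h : a ≤ c * ((x / y) ^ 2 * b)) : a * (y / x) ^ 2 ≤ c * b :=
  calc a * (y / x) ^ 2 ≤ c * ((x / y) ^ 2 * b) * (y / x) ^ 2 := by gcongr
    _ = c * b := by field_simp

/-- The exponential barrier `λ exp (-K θ(r) / (S - t))` with profile `θ`, amplitude `λ` and horizon
`S`, used as a supersolution for `t < S`; the theorem takes `θ = log ψ` and `S = 2T`. -/
noncomputable def expBarrier (θ : ℝ → ℝ) (lam K S r t : ℝ) : ℝ :=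
  lam * exp (-K * θ r / (S - t))

section ExpBarrier

variable {θ : ℝ → ℝ} {θ' θ'' lam K S r t : ℝ} {s : Set ℝ}

lemma expBarrier_nonneg (hlam : 0 ≤ lam) : 0 ≤ expBarrier θ lam K S r t :=
  mul_nonneg hlam (exp_pos _).le

lemma hasDerivAt_expBarrier_time (ht : t ≠ S) :
    HasDerivAt (expBarrier θ lam K S r)
      (-(K / (S - t) ^ 2 * θ r) * expBarrier θ lam K S r t) t := by
  have hsub : HasDerivAt (fun τ => S - τ) (-1) t := (hasDerivAt_id t).const_sub S
  have hexp := (((hasDerivAt_const t (-K * θ r)).fun_div hsub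
    (sub_ne_zero.mpr ht.symm)).exp).const_mul lam
  refine hexp.congr_deriv ?_
  rw [expBarrier]
  ring

lemma hasDerivWithinAt_expBarrier_space (hθ : HasDerivWithinAt θ θ' s r) :
    HasDerivWithinAt (fun x => expBarrier θ lam K S x t)
      (-(K / (S - t) * θ') * expBarrier θ lam K S r t) s r := by
  refine ((((hθ.const_mul (-K)).div_const (S - t)).exp).const_mul lam).congr_deriv ?_
  rw [expBarrier]
  ring

lemma deriv_expBarrier_space (hθ : DifferentiableAt ℝ θ r) :
    deriv (fun x => expBarrier θ lam K S x t) r =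
      -(K / (S - t) * deriv θ r) * expBarrier θ lam K S r t :=
  (hasDerivWithinAt_univ.mp (hasDerivWithinAt_expBarrier_space
    (hasDerivWithinAt_univ.mpr hθ.hasDerivAt))).deriv

lemma hasDerivWithinAt_deriv_expBarrier_space (hθ : ∀ x ∈ s, DifferentiableAt ℝ θ x)
    (hr : r ∈ s) (hθ' : HasDerivWithinAt (deriv θ) θ'' s r) :
    HasDerivWithinAt (deriv fun x => expBarrier θ lam K S x t)
      (((K / (S - t) * deriv θ r) ^ 2 - K / (S - t) * θ'') * expBarrier θ lam K S r t) s r := by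
  have hprod := (hθ'.const_mul (K / (S - t))).fun_neg.fun_mul (hasDerivWithinAt_expBarrier_space
    (lam := lam) (K := K) (S := S) (t := t) (hθ r hr).hasDerivAt.hasDerivWithinAt)
  have hderiv : ∀ x ∈ s, deriv (fun x => expBarrier θ lam K S x t) x =
      -(K / (S - t) * deriv θ x) * expBarrier θ lam K S x t :=
    fun x hx => deriv_expBarrier_space (hθ x hx)
  refine (hprod.congr hderiv (hderiv r hr)).congr_deriv ?_
  ring

lemma deriv_deriv_expBarrier_space_le (hs : UniqueDiffWithinAt ℝ s r)
    (hθ : ∀ x ∈ s, DifferentiableAt ℝ θ x) (hr : r ∈ s)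
    (hθ' : HasDerivWithinAt (deriv θ) θ'' s r) (hθ'' : -deriv θ r ^ 2 ≤ θ'')
    (hlam : 0 ≤ lam) (hK : 0 ≤ K) (ht : t ≤ S) :
    deriv (deriv fun x => expBarrier θ lam K S x t) r ≤
      K / (S - t) * (K / (S - t) + 1) * deriv θ r ^ 2 * expBarrier θ lam K S r t := by
  have hη : 0 ≤ expBarrier θ lam K S r t := expBarrier_nonneg hlam
  have hp : 0 ≤ K / (S - t) := div_nonneg hK (sub_nonneg.mpr ht)
  obtain h | h := deriv_eq_or_eq_zero_of_hasDerivWithinAt hs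
    (hasDerivWithinAt_deriv_expBarrier_space (lam := lam) (K := K) (S := S) (t := t) hθ hr hθ')
  · rw [h]
    gcongr
    linarith [mul_le_mul_of_nonneg_left hθ'' hp]
  · rw [h]
    positivity

theorem expBarrier_supersolution {C a μ : ℝ} (hs : UniqueDiffWithinAt ℝ s r)
    (hθ : ∀ x ∈ s, DifferentiableAt ℝ θ x) (hr : r ∈ s) (hθ0 : 0 ≤ θ r) (hθ1 : 0 ≤ deriv θ r)
    (hθ' : HasDerivWithinAt (deriv θ) θ'' s r) (hθ'' : -deriv θ r ^ 2 ≤ θ'')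
    (hlam : 0 ≤ lam) (hK : 0 ≤ K) (ht : t < S) (hC : C * (S - t + K) ≤ 1)
    (ha : 0 ≤ a) (haC : a * deriv θ r ^ 2 ≤ C * θ r) (hμ : 0 ≤ μ) :
    deriv (expBarrier θ lam K S r) t
      + a * (deriv (deriv fun x => expBarrier θ lam K S x t) r
        + μ * deriv (fun x => expBarrier θ lam K S x t) r) ≤ 0 := by
  have hrr := deriv_deriv_expBarrier_space_le hs hθ hr hθ' hθ'' hlam hK ht.le
  rw [(hasDerivAt_expBarrier_time ht.ne).deriv, deriv_expBarrier_space (hθ r hr)]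
  set η := expBarrier θ lam K S r t
  set p := K / (S - t) with hp_def
  have hη : 0 ≤ η := expBarrier_nonneg hlam
  have hSt : 0 < S - t := sub_pos.mpr ht
  have hp : 0 ≤ p := by positivity
  have hdrift : 0 ≤ μ * (p * deriv θ r * η) :=
    mul_nonneg hμ (mul_nonneg (mul_nonneg hp hθ1) hη)
  have hCp : C * (p + 1) ≤ 1 / (S - t) := by
    rw [le_div_iff₀ hSt, hp_def]
    calc C * (K / (S - t) + 1) * (S - t) = C * (S - t + K) := by field_simp; ring
      _ ≤ 1 := hC
  have hdiffusion : a * (deriv (deriv fun x => expBarrier θ lam K S x t) r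
      + μ * (-(p * deriv θ r) * η)) ≤ K / (S - t) ^ 2 * θ r * η := by
    calc _ ≤ a * (p * (p + 1) * deriv θ r ^ 2 * η) := by gcongr; linarith
      _ = p * (p + 1) * η * (a * deriv θ r ^ 2) := by ring
      _ ≤ p * (p + 1) * η * (C * θ r) := by gcongr
      _ = p * θ r * η * (C * (p + 1)) := by ring
      _ ≤ p * θ r * η * (1 / (S - t)) := by gcongr
      _ = K / (S - t) ^ 2 * θ r * η := by rw [hp_def]; field_simp
  linarith

end ExpBarrier

/-- The exponential barrier `η(r,t) = λ exp(-K log ψ(r)/(2T-t))` is a supersolution of the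
backward dual equation `η_t + a (∂²_r η + μ ∂_r η) ≤ 0` on `[2,∞) × (0,T)`, provided
`ψ ≥ 1`, `ψ' > 0`, `ψ'' ≥ 0`, `μ ≥ 0`, `0 ≤ a ≤ C₂ B` with `B = (ψ/ψ')² log ψ`, and
`2T + K ≤ 1/C₂`. -/
theorem statement11 (ψ : ℝ → ℝ)
    (hψC2 : ContDiffOn ℝ 2 ψ (Ici 2))
    (hψ1 : ∀ r ≥ (2:ℝ), 1 ≤ ψ r)
    (hψ' : ∀ r ≥ (2:ℝ), 0 < deriv ψ r)
    (hψ'' : ∀ r ≥ (2:ℝ), 0 ≤ deriv (deriv ψ) r)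
    (T K C₂ lam : ℝ) (hT : 0 < T) (hK : 0 < K) (hC₂ : 0 < C₂) (hlam : 0 < lam)
    (hTK : 2*T + K ≤ 1/C₂)
    (a μ : ℝ → ℝ → ℝ)
    (ha : ∀ r ≥ (2:ℝ), ∀ t, 0 < t → t < T →
      0 ≤ a r t ∧ a r t ≤ C₂ * ((ψ r / deriv ψ r)^2 * Real.log (ψ r)))
    (hμ : ∀ r ≥ (2:ℝ), ∀ t, 0 < t → t < T → 0 ≤ μ r t)
    (η : ℝ → ℝ → ℝ)
    (hη : ∀ r t, η r t = lam * Real.exp (-K * Real.log (ψ r) / (2*T - t))) :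
    ∀ r ≥ (2:ℝ), ∀ t, 0 < t → t < T →
      deriv (fun τ => η r τ) t
          + a r t * (deriv (deriv (fun s => η s t)) r + μ r t * deriv (fun s => η s t) r)
        ≤ 0 := by
  intro r hr t ht0 htT
  obtain ⟨ha0, haB⟩ := ha r hr t ht0 htT
  have hψ_pos : ∀ x ∈ Ici (2 : ℝ), 0 < ψ x := fun x hx => one_pos.trans_le (hψ1 x hx)
  have hψ_diff : ∀ x ∈ Ici (2 : ℝ), DifferentiableAt ℝ ψ x :=
    fun x hx => differentiableAt_of_deriv_ne_zero (hψ' x hx).ne'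
  have hψ'_diff : DifferentiableOn ℝ (deriv ψ) (Ici 2) :=
    differentiableOn_deriv_of_contDiffOn_two (uniqueDiffOn_Ici 2) hψC2 hψ_diff
  have hψ''_nonneg : 0 ≤ derivWithin (deriv ψ) (Ici 2) r :=
    derivWithin_nonneg_of_deriv_nonneg_interior (convex_Ici 2) hψ'_diff
      fun x hx => hψ'' x (interior_subset hx)
  have hlog : deriv (fun x => log (ψ x)) r = deriv ψ r / ψ r :=
    deriv.log (hψ_diff r hr) (hψ_pos r hr).ne'
  obtain rfl : η = expBarrier (fun x => log (ψ x)) lam K (2 * T) := funext₂ hη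
  refine expBarrier_supersolution (C := C₂) (uniqueDiffOn_Ici 2 r hr)
    (fun x hx => (hψ_diff x hx).log (hψ_pos x hx).ne') hr (log_nonneg (hψ1 r hr)) ?_
    (hasDerivWithinAt_deriv_log_comp hψ_diff (fun x hx => (hψ_pos x hx).ne') hr
      (hψ'_diff r hr).hasDerivWithinAt) ?_ hlam.le hK.le (by linarith) ?_ ha0 ?_ (hμ r hr t ht0 htT)
  · rw [hlog]; exact (div_pos (hψ' r hr) (hψ_pos r hr)).le
  · rw [hlog]; linarith [div_nonneg hψ''_nonneg (hψ_pos r hr).le]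
  · rw [le_div_iff₀ hC₂] at hTK; linarith [mul_pos hC₂ ht0]
  · rw [hlog]; exact mul_div_sq_le_of_le_mul_div_sq (hψ_pos r hr) (hψ' r hr) haB
end

section
/- For every C₀ > 0 there exist constants a, b, c > 0 such that the function ψ: [0,∞) → ℝ defined by ψ(r) = sinh(cr)/c for r ∈ [0,1) and ψ(r) = a·e^{C₀ r²/2} - b for r ≥ 1 is continuously differentiable on [0,∞), twice differentiable on [0,1) ∪ (1,∞), satisfies ψ(0) = 0, ψ'(0) = 1, ψ(r) > 0 for all r > 0, and ψ''(r)/ψ(r) ≥ C₀ (1 + C₀ r²) for all r ∈ (0,1) ∪ (1,∞). -/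
open Real MeasureTheory Set Filter

/-!
On `[0, 1)` the quotient `ψ'' / ψ` is the constant `c²`, so it dominates `C₀ (1 + C₀ r²)` as soon
as `C₀ (1 + C₀) ≤ c²`. On `(1, ∞)` one has `ψ'' = C₀ (1 + C₀ r²) (ψ + b)`, which is enough when
`0 ≤ b`. The values and first derivatives of the two branches agree at `1` for exactly one pair
`(a, b)`, and `b > 0` there amounts to `C₀ tanh c < c`, which follows from `C₀ ≤ c`.
-/

section Gluing

open Topology

theorem ite_lt_eventuallyEq_left {α β : Type*} [TopologicalSpace α] [LinearOrder α]
    [ClosedIciTopology α] {f g : α → β} {r t : α} (hr : r < t) :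
    (fun x => if x < t then f x else g x) =ᶠ[𝓝 r] f :=
  eventuallyEq_of_mem (Iio_mem_nhds hr) fun _ hx => if_pos hx

theorem ite_lt_eventuallyEq_right {α β : Type*} [TopologicalSpace α] [LinearOrder α]
    [ClosedIicTopology α] {f g : α → β} {r t : α} (hr : t < r) :
    (fun x => if x < t then f x else g x) =ᶠ[𝓝 r] g :=
  eventuallyEq_of_mem (Ioi_mem_nhds hr) fun _ hx => if_neg (not_lt_of_gt hx)

variable {E : Type*} [NormedAddCommGroup E] [NormedSpace ℝ E] {f g : ℝ → E} {t : ℝ}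

theorem hasDerivAt_ite_lt_self {f' : E} (hf : HasDerivWithinAt f f' (Iic t) t)
    (hg : HasDerivWithinAt g f' (Ici t) t) (hfg : f t = g t) :
    HasDerivAt (fun x => if x < t then f x else g x) f' t := by
  have left : HasDerivWithinAt (fun x => if x < t then f x else g x) f' (Iic t) t := by
    refine hf.congr_of_mem (fun x hx => ?_) self_mem_Iic
    rcases (mem_Iic.mp hx).lt_or_eq with hlt | rfl
    · exact if_pos hlt
    · simp only [lt_irrefl, if_false, hfg]
  have right : HasDerivWithinAt (fun x => if x < t then f x else g x) f' (Ici t) t :=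
    hg.congr_of_mem (fun x hx => if_neg (not_lt_of_ge hx)) self_mem_Ici
  have union := left.union right
  rwa [Iic_union_Ici, hasDerivWithinAt_univ] at union

theorem hasDerivAt_ite_lt (hf : Differentiable ℝ f) (hg : Differentiable ℝ g) (hfg : f t = g t)
    (hfg' : deriv f t = deriv g t) (r : ℝ) :
    HasDerivAt (fun x => if x < t then f x else g x)
      (if r < t then deriv f r else deriv g r) r := by
  rcases lt_trichotomy r t with hr | rfl | hr
  · rw [if_pos hr]
    exact (hf r).hasDerivAt.congr_of_eventuallyEq (ite_lt_eventuallyEq_left hr)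
  · rw [if_neg (lt_irrefl r)]
    exact hasDerivAt_ite_lt_self (hfg' ▸ (hf r).hasDerivAt.hasDerivWithinAt)
      (hg r).hasDerivAt.hasDerivWithinAt hfg
  · rw [if_neg (not_lt_of_gt hr)]
    exact (hg r).hasDerivAt.congr_of_eventuallyEq (ite_lt_eventuallyEq_right hr)

theorem contDiff_one_ite_lt (hf : ContDiff ℝ 1 f) (hg : ContDiff ℝ 1 g) (hfg : f t = g t)
    (hfg' : deriv f t = deriv g t) : ContDiff ℝ 1 fun x => if x < t then f x else g x := by
  have hasDeriv := hasDerivAt_ite_lt (hf.differentiable one_ne_zero)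
    (hg.differentiable one_ne_zero) hfg hfg'
  refine contDiff_one_iff_deriv.mpr ⟨fun r => (hasDeriv r).differentiableAt, ?_⟩
  rw [funext fun r => (hasDeriv r).deriv]
  simp only [← not_le, ite_not]
  exact (hg.continuous_deriv le_rfl).if_le (hf.continuous_deriv le_rfl) continuous_const
    continuous_id fun _ hr => hr ▸ hfg'.symm

end Gluing

/-- The model function of the hyperbolic space of curvature `-c²`. -/
noncomputable def sinhProfile (c r : ℝ) : ℝ := sinh (c * r) / c

section SinhProfile

variable {c r : ℝ}

theorem contDiff_sinhProfile (c : ℝ) {n : WithTop ℕ∞} : ContDiff ℝ n (sinhProfile c) :=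
  (contDiff_sinh.comp (contDiff_const.mul contDiff_id)).div_const c

theorem sinhProfile_zero (c : ℝ) : sinhProfile c 0 = 0 := by
  simp [sinhProfile]

theorem sinhProfile_pos (hc : 0 < c) (hr : 0 < r) : 0 < sinhProfile c r :=
  div_pos (sinh_pos_iff.mpr (mul_pos hc hr)) hc

theorem deriv_sinhProfile (hc : c ≠ 0) : deriv (sinhProfile c) = fun r => cosh (c * r) := by
  funext r
  refine ((((hasDerivAt_id r).const_mul c).sinh).div_const c).deriv.trans ?_
  simp only [id, mul_one]
  exact mul_div_cancel_right₀ _ hc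

theorem deriv_deriv_sinhProfile (hc : c ≠ 0) (r : ℝ) :
    deriv (deriv (sinhProfile c)) r = c ^ 2 * sinhProfile c r := by
  rw [deriv_sinhProfile hc]
  refine ((hasDerivAt_id r).const_mul c).cosh.deriv.trans ?_
  simp only [id, sinhProfile]
  field_simp

end SinhProfile

/-- The two-parameter family `a * exp (C * r ^ 2 / 2) - b` from which the branch of the model
function on `[1, ∞)` is chosen. -/
noncomputable def expSqProfile (C a b r : ℝ) : ℝ := a * exp (C * r ^ 2 / 2) - b

section ExpSqProfile

variable {C a b r : ℝ}

theorem contDiff_expSqProfile (C a b : ℝ) {n : WithTop ℕ∞} :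
    ContDiff ℝ n (expSqProfile C a b) := by
  unfold expSqProfile
  fun_prop

theorem monotoneOn_expSqProfile (hC : 0 ≤ C) (ha : 0 ≤ a) :
    MonotoneOn (expSqProfile C a b) (Ici 0) := by
  intro r hr s _ hrs
  have hr : 0 ≤ r := hr
  unfold expSqProfile
  gcongr

theorem hasDerivAt_exp_const_mul_sq_div_two (C r : ℝ) :
    HasDerivAt (fun x => exp (C * x ^ 2 / 2)) (C * r * exp (C * r ^ 2 / 2)) r := by
  refine ((((hasDerivAt_id r).pow 2).const_mul C).div_const 2).exp.congr_deriv ?_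
  simp only [id, Nat.cast_ofNat, Pi.pow_apply]
  ring

theorem deriv_expSqProfile (C a b : ℝ) :
    deriv (expSqProfile C a b) = fun r => a * (C * r * exp (C * r ^ 2 / 2)) :=
  funext fun r =>
    (((hasDerivAt_exp_const_mul_sq_div_two C r).const_mul a).sub_const b).deriv

theorem deriv_deriv_expSqProfile (C a b r : ℝ) :
    deriv (deriv (expSqProfile C a b)) r = C * (1 + C * r ^ 2) * (expSqProfile C a b r + b) := by
  rw [deriv_expSqProfile]
  have hlin : HasDerivAt (fun x => C * x) C r := by
    simpa using (hasDerivAt_id r).const_mul C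
  refine ((hlin.mul (hasDerivAt_exp_const_mul_sq_div_two C r)).const_mul a).deriv.trans ?_
  simp only [expSqProfile]
  ring

end ExpSqProfile

/-- The factor `a` for which `expSqProfile C a b` and `sinhProfile c` have the same derivative
at `1`. -/
noncomputable def gluingFactor (C c : ℝ) : ℝ := cosh c * exp (-(C / 2)) / C

/-- The shift `b` for which `expSqProfile C (gluingFactor C c) b` and `sinhProfile c` have the same
value at `1`. -/
noncomputable def gluingShift (C c : ℝ) : ℝ := cosh c / C - sinh c / c

/-- The model function: hyperbolic of curvature `-c²` on the unit ball, continued beyond it by the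
member of the family `expSqProfile C` that makes it continuously differentiable. It is defined on
the whole line, with `sinhProfile c` also on the negative half-line. -/
noncomputable def modelFunction (C c r : ℝ) : ℝ :=
  if r < 1 then sinhProfile c r else expSqProfile C (gluingFactor C c) (gluingShift C c) r

section ModelFunction

open Topology

variable {C c r : ℝ}

theorem gluingFactor_pos (hC : 0 < C) : 0 < gluingFactor C c :=
  div_pos (mul_pos (cosh_pos c) (exp_pos _)) hC

theorem gluingShift_pos (hC : 0 < C) (hCc : C ≤ c) : 0 < gluingShift C c := by
  have hc : 0 < c := hC.trans_le hCc
  rw [gluingShift, sub_pos, div_lt_div_iff₀ hc hC]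
  calc sinh c * C ≤ sinh c * c := by gcongr
    _ < cosh c * c := by gcongr; exact sinh_lt_cosh c

theorem gluingFactor_mul_exp (C c : ℝ) : gluingFactor C c * exp (C / 2) = cosh c / C := by
  rw [gluingFactor, div_mul_eq_mul_div, mul_assoc, ← exp_add, neg_add_cancel, exp_zero, mul_one]

theorem sinhProfile_one_eq_expSqProfile_one (C c : ℝ) :
    sinhProfile c 1 = expSqProfile C (gluingFactor C c) (gluingShift C c) 1 := by
  rw [sinhProfile, expSqProfile, one_pow, mul_one, mul_one, gluingFactor_mul_exp, gluingShift,
    sub_sub_cancel]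

theorem deriv_sinhProfile_one_eq_deriv_expSqProfile_one (hC : C ≠ 0) (hc : c ≠ 0) (b : ℝ) :
    deriv (sinhProfile c) 1 = deriv (expSqProfile C (gluingFactor C c) b) 1 := by
  simp only [deriv_sinhProfile hc, deriv_expSqProfile, one_pow, mul_one]
  rw [mul_left_comm, gluingFactor_mul_exp, mul_div_cancel₀ _ hC]

theorem contDiff_one_modelFunction (hC : C ≠ 0) (hc : c ≠ 0) :
    ContDiff ℝ 1 (modelFunction C c) :=
  contDiff_one_ite_lt (contDiff_sinhProfile c) (contDiff_expSqProfile C _ _)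
    (sinhProfile_one_eq_expSqProfile_one C c)
    (deriv_sinhProfile_one_eq_deriv_expSqProfile_one hC hc _)

theorem contDiffOn_modelFunction_Iio (C c : ℝ) {n : WithTop ℕ∞} :
    ContDiffOn ℝ n (modelFunction C c) (Iio 1) :=
  (contDiff_sinhProfile c).contDiffOn.congr fun _ hr => if_pos hr

theorem contDiffOn_modelFunction_Ici (C c : ℝ) {n : WithTop ℕ∞} :
    ContDiffOn ℝ n (modelFunction C c) (Ici 1) :=
  (contDiff_expSqProfile C _ _).contDiffOn.congr fun _ hr => if_neg (not_lt_of_ge hr)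

theorem modelFunction_zero (C c : ℝ) : modelFunction C c 0 = 0 :=
  (if_pos one_pos).trans (sinhProfile_zero c)

theorem deriv_modelFunction_zero (C : ℝ) (hc : c ≠ 0) : deriv (modelFunction C c) 0 = 1 := by
  have inner : modelFunction C c =ᶠ[𝓝 0] sinhProfile c := ite_lt_eventuallyEq_left one_pos
  simp only [inner.deriv_eq, deriv_sinhProfile hc, mul_zero, cosh_zero]

theorem modelFunction_pos (hC : 0 < C) (hc : 0 < c) (hr : 0 < r) : 0 < modelFunction C c r := by
  unfold modelFunction
  split_ifs with hr1
  · exact sinhProfile_pos hc hr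
  · calc 0 < sinhProfile c 1 := sinhProfile_pos hc one_pos
      _ = expSqProfile C (gluingFactor C c) (gluingShift C c) 1 :=
        sinhProfile_one_eq_expSqProfile_one C c
      _ ≤ expSqProfile C (gluingFactor C c) (gluingShift C c) r :=
        monotoneOn_expSqProfile hC.le (gluingFactor_pos hC).le (mem_Ici.mpr zero_le_one)
          (mem_Ici.mpr hr.le) (not_lt.mp hr1)

theorem deriv_deriv_modelFunction_of_lt_one (C : ℝ) (hc : c ≠ 0) (hr : r < 1) :
    deriv (deriv (modelFunction C c)) r = c ^ 2 * modelFunction C c r := by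
  have inner : modelFunction C c =ᶠ[𝓝 r] sinhProfile c := ite_lt_eventuallyEq_left hr
  rw [inner.deriv.deriv_eq, deriv_deriv_sinhProfile hc, inner.eq_of_nhds]

theorem deriv_deriv_modelFunction_of_one_lt (C c : ℝ) (hr : 1 < r) :
    deriv (deriv (modelFunction C c)) r =
      C * (1 + C * r ^ 2) * (modelFunction C c r + gluingShift C c) := by
  have outer : modelFunction C c =ᶠ[𝓝 r] expSqProfile C (gluingFactor C c) (gluingShift C c) :=
    ite_lt_eventuallyEq_right hr
  rw [outer.deriv.deriv_eq, deriv_deriv_expSqProfile, outer.eq_of_nhds]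

theorem le_deriv_deriv_div_modelFunction (hC : 0 < C) (hCc : C ≤ c) (hc : C * (1 + C) ≤ c ^ 2)
    (hr : 0 < r) (hr1 : r ≠ 1) :
    C * (1 + C * r ^ 2) ≤ deriv (deriv (modelFunction C c)) r / modelFunction C c r := by
  have hc0 : 0 < c := hC.trans_le hCc
  have hψ : 0 < modelFunction C c r := modelFunction_pos hC hc0 hr
  rw [le_div_iff₀ hψ]
  rcases hr1.lt_or_gt with hlt | hgt
  · rw [deriv_deriv_modelFunction_of_lt_one C hc0.ne' hlt]
    have hr2 : r ^ 2 ≤ 1 := pow_le_one₀ hr.le hlt.le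
    gcongr
    calc C * (1 + C * r ^ 2) ≤ C * (1 + C * 1) := by gcongr
      _ ≤ c ^ 2 := by rwa [mul_one]
  · rw [deriv_deriv_modelFunction_of_one_lt C c hgt]
    gcongr
    exact le_add_of_nonneg_right (gluingShift_pos hC hCc).le

end ModelFunction

/-- For every `C₀ > 0` there are `a, b, c > 0` such that the function equal to
`sinh(cr)/c` on `[0,1)` and to `a e^{C₀ r²/2} - b` on `[1,∞)` is `C¹` on `[0,∞)`,
`C²` on `[0,1) ∪ (1,∞)`, satisfies `ψ(0)=0`, `ψ'(0)=1`, `ψ > 0` on `(0,∞)`, and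
`ψ''/ψ ≥ C₀(1+C₀ r²)` on `(0,1) ∪ (1,∞)`; i.e. it is an admissible model function
with radial curvature at least quadratically negative. -/
theorem statement12 (C₀ : ℝ) (hC₀ : 0 < C₀) :
    ∃ a b c : ℝ, 0 < a ∧ 0 < b ∧ 0 < c ∧
      ∀ ψ : ℝ → ℝ,
        (∀ r, ψ r = if r < 1 then Real.sinh (c*r)/c else a * Real.exp (C₀*r^2/2) - b) →
        ContDiffOn ℝ 1 ψ (Ici 0) ∧
        ContDiffOn ℝ 2 ψ (Ico 0 1) ∧
        ContDiffOn ℝ 2 ψ (Ioi 1) ∧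
        ψ 0 = 0 ∧ deriv ψ 0 = 1 ∧ (∀ r > (0:ℝ), 0 < ψ r) ∧
        ∀ r : ℝ, ((0 < r ∧ r < 1) ∨ 1 < r) →
          C₀ * (1 + C₀ * r^2) ≤ deriv (deriv ψ) r / ψ r := by
  obtain ⟨c, hCc, hc⟩ : ∃ c, C₀ ≤ c ∧ C₀ * (1 + C₀) ≤ c ^ 2 := ⟨C₀ + 1, by linarith, by nlinarith⟩
  have hc0 : 0 < c := hC₀.trans_le hCc
  refine ⟨gluingFactor C₀ c, gluingShift C₀ c, c, gluingFactor_pos hC₀, gluingShift_pos hC₀ hCc,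
    hc0, fun ψ hψ => ?_⟩
  obtain rfl : ψ = modelFunction C₀ c := funext hψ
  refine ⟨(contDiff_one_modelFunction hC₀.ne' hc0.ne').contDiffOn,
    (contDiffOn_modelFunction_Iio C₀ c).mono fun _ hr => hr.2,
    (contDiffOn_modelFunction_Ici C₀ c).mono Ioi_subset_Ici_self, modelFunction_zero C₀ c,
    deriv_modelFunction_zero C₀ hc0.ne', fun _ hr => modelFunction_pos hC₀ hc0 hr, ?_⟩
  rintro r (⟨hr, hr1⟩ | hr1)
  · exact le_deriv_deriv_div_modelFunction hC₀ hCc hc hr hr1.ne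
  · exact le_deriv_deriv_div_modelFunction hC₀ hCc hc (one_pos.trans hr1) hr1.ne'
end

section
/- Let C₀ > 0, K > 0 and κ > K/C₀. Then there exists R > 1 such that for every A > 0, B > 0 and every r > R, the function φ(r) := A·e^{C₀ r²/2} (log r)^{-κ} + B satisfies φ''(r)/φ(r) ≤ C₀ (1 + C₀ r²) - K/log r. More precisely, setting f(r) := e^{C₀ r²/2} (log r)^{-κ}, one has the identity f''(r)/f(r) = C₀(1 + C₀ r²) + (κ/(r² log r))(1 + (κ+1)/log r) - 2κ C₀/log r for all r > 1, and for r > R it holds φ''(r)/φ(r) ≤ f''(r)/f(r) ≤ C₀(1 + C₀ r²) - K/log r. -/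
open Real MeasureTheory Set Filter

/-!
Write `f' = f g` with `g(r) = C r - κ / (r log r)`. Then `f'' = f (g² + g')`, which gives the
closed form of `f'' / f`. Multiplying `f'' / f - C (1 + C r²)` by `log r` leaves a quantity tending
to `-2κC`, so `f'' / f` is eventually below `C (1 + C r²) - K / log r` when `K < 2κC`; for `C ≠ 0`
it also follows that `f'' / f` tends to infinity, so that `f` is eventually convex. Once `f'' ≥ 0`,
adding a nonnegative constant to `A f` leaves the second derivative unchanged and only enlarges the
denominator.
-/

section SecondDerivative

variable {𝕜 : Type*} [NontriviallyNormedField 𝕜]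

theorem deriv_deriv_eq_mul_of_hasDerivAt_mul {𝔸 : Type*} [NormedRing 𝔸] [NormedAlgebra 𝕜 𝔸]
    {f g : 𝕜 → 𝔸} {g' : 𝔸} {x : 𝕜} (hf : ∀ᶠ y in nhds x, HasDerivAt f (f y * g y) y)
    (hg : HasDerivAt g g' x) : deriv (deriv f) x = f x * (g x ^ 2 + g') := by
  have hderiv : deriv f =ᶠ[nhds x] f * g := hf.mono fun y hy => hy.deriv
  rw [hderiv.deriv_eq, (hf.self_of_nhds.mul hg).deriv]
  noncomm_ring

theorem deriv_deriv_const_mul_add_const {F : Type*} [NormedField F] [NormedAlgebra 𝕜 F]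
    (f : 𝕜 → F) (a b : F) :
    deriv (deriv fun x => a * f x + b) = fun x => a * deriv (deriv f) x := by
  have hderiv : deriv (fun x => a * f x + b) = fun x => a * deriv f x := by
    funext x
    rw [deriv_add_const, deriv_const_mul_field]
  funext x
  rw [hderiv, deriv_const_mul_field]

theorem deriv_deriv_const_mul_add_const_div_le {f : ℝ → ℝ} {a b x : ℝ} (ha : 0 < a) (hb : 0 ≤ b)
    (hf : 0 < f x) (hf'' : 0 ≤ deriv (deriv f) x) :
    deriv (deriv fun y => a * f y + b) x / (a * f x + b) ≤ deriv (deriv f) x / f x := by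
  rw [deriv_deriv_const_mul_add_const]
  calc a * deriv (deriv f) x / (a * f x + b)
      ≤ a * deriv (deriv f) x / (a * f x) := by gcongr; exact le_add_of_nonneg_right hb
    _ = deriv (deriv f) x / f x := mul_div_mul_left _ _ ha.ne'

end SecondDerivative

section Warping

variable {C K κ r : ℝ}

/-- The warping function `f` of a model metric `dr² + f(r)² dθ²`: a Gaussian with rate `C`, damped
by a power of the logarithm. -/
noncomputable def warping (C κ r : ℝ) : ℝ :=
  exp (C * r ^ 2 / 2) * log r ^ (-κ)

/-- The closed form of `f'' / f` for `f = warping C κ`, that is, of minus the radial curvature of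
the model metric `dr² + f(r)² dθ²`. -/
noncomputable def negRadialCurvature (C κ r : ℝ) : ℝ :=
  C * (1 + C * r ^ 2) + κ / (r ^ 2 * log r) * (1 + (κ + 1) / log r) - 2 * κ * C / log r

theorem warping_pos (C κ : ℝ) (hr : 1 < r) : 0 < warping C κ r :=
  mul_pos (exp_pos _) (rpow_pos_of_pos (log_pos hr) _)

theorem hasDerivAt_warping (C κ : ℝ) (hr : log r ≠ 0) :
    HasDerivAt (warping C κ) (warping C κ r * (C * r - κ / (r * log r))) r := by
  have hr₀ : r ≠ 0 := (log_ne_zero.1 hr).1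
  have hgauss : HasDerivAt (fun s => exp (C * s ^ 2 / 2)) (exp (C * r ^ 2 / 2) * (C * r)) r := by
    refine ((((hasDerivAt_pow 2 r).const_mul C).div_const 2).exp).congr_deriv ?_
    push_cast
    ring
  have hlog : HasDerivAt (fun s => log s ^ (-κ)) (log r ^ (-κ) * (-κ / (r * log r))) r := by
    refine ((hasDerivAt_log hr₀).rpow_const (Or.inl hr)).congr_deriv ?_
    rw [rpow_sub_one hr]
    field_simp
  refine (hgauss.mul hlog).congr_deriv ?_
  rw [warping]
  ring

theorem hasDerivAt_logDeriv_warping (C κ : ℝ) (hr : log r ≠ 0) :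
    HasDerivAt (fun s => C * s - κ / (s * log s)) (C + κ * (log r + 1) / (r * log r) ^ 2) r := by
  have hr₀ : r ≠ 0 := (log_ne_zero.1 hr).1
  have hquot := (hasDerivAt_const r κ).div (hasDerivAt_mul_log hr₀) (mul_ne_zero hr₀ hr)
  refine (((hasDerivAt_id r).const_mul C).sub hquot).congr_deriv ?_
  ring

theorem deriv_deriv_warping (C κ : ℝ) (hr : log r ≠ 0) :
    deriv (deriv (warping C κ)) r = warping C κ r * negRadialCurvature C κ r := by
  have hr₀ : r ≠ 0 := (log_ne_zero.1 hr).1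
  have hwarping : ∀ᶠ s in nhds r,
      HasDerivAt (warping C κ) (warping C κ s * (C * s - κ / (s * log s))) s :=
    ((continuousAt_log hr₀).eventually_ne hr).mono fun _ => hasDerivAt_warping C κ
  rw [deriv_deriv_eq_mul_of_hasDerivAt_mul hwarping (hasDerivAt_logDeriv_warping C κ hr),
    negRadialCurvature]
  congr 1
  field_simp
  ring

theorem deriv_deriv_warping_div_warping (C κ : ℝ) (hr : 1 < r) :
    deriv (deriv (warping C κ)) r / warping C κ r = negRadialCurvature C κ r := by
  rw [deriv_deriv_warping C κ (log_pos hr).ne', mul_div_cancel_left₀ _ (warping_pos C κ hr).ne']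

theorem tendsto_log_mul_negRadialCurvature_sub (C κ : ℝ) :
    Tendsto (fun r => log r * (negRadialCurvature C κ r - C * (1 + C * r ^ 2))) atTop
      (nhds (-(2 * κ * C))) := by
  have hsq : Tendsto (fun r : ℝ => κ / r ^ 2) atTop (nhds 0) :=
    tendsto_const_nhds.div_atTop (tendsto_pow_atTop two_ne_zero)
  have hlog : Tendsto (fun r => (κ + 1) / log r) atTop (nhds 0) :=
    tendsto_const_nhds.div_atTop tendsto_log_atTop
  have hlim : Tendsto (fun r => κ / r ^ 2 * (1 + (κ + 1) / log r) - 2 * κ * C) atTop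
      (nhds (-(2 * κ * C))) := by
    simpa using (hsq.mul (hlog.const_add 1)).sub_const (2 * κ * C)
  refine hlim.congr' ?_
  filter_upwards [eventually_gt_atTop 1] with r hr
  have hlog_ne : log r ≠ 0 := (log_pos hr).ne'
  rw [negRadialCurvature]
  field_simp
  ring

theorem tendsto_negRadialCurvature_atTop (hC : C ≠ 0) (κ : ℝ) :
    Tendsto (negRadialCurvature C κ) atTop atTop := by
  have hmain : Tendsto (fun r : ℝ => C + C ^ 2 * r ^ 2) atTop atTop :=
    tendsto_atTop_add_const_left _ _
      ((tendsto_pow_atTop two_ne_zero).const_mul_atTop (by positivity))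
  have herror := (tendsto_log_mul_negRadialCurvature_sub C κ).div_atTop tendsto_log_atTop
  refine (hmain.atTop_add herror).congr' ?_
  filter_upwards [eventually_gt_atTop 1] with r hr
  rw [mul_div_cancel_left₀ _ (log_pos hr).ne']
  ring

theorem eventually_negRadialCurvature_le (hK : K < 2 * κ * C) :
    ∀ᶠ r in atTop, negRadialCurvature C κ r ≤ C * (1 + C * r ^ 2) - K / log r := by
  have hlt := (tendsto_log_mul_negRadialCurvature_sub C κ).eventually_lt_const (neg_lt_neg hK)
  filter_upwards [hlt, eventually_gt_atTop 1] with r hr hr₁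
  have hle : negRadialCurvature C κ r - C * (1 + C * r ^ 2) ≤ -K / log r :=
    (le_div_iff₀' (log_pos hr₁)).2 hr.le
  rw [neg_div] at hle
  linarith

theorem eventually_deriv_deriv_warping_nonneg (hC : C ≠ 0) (κ : ℝ) :
    ∀ᶠ r in atTop, 0 ≤ deriv (deriv (warping C κ)) r := by
  filter_upwards [(tendsto_negRadialCurvature_atTop hC κ).eventually_ge_atTop 0,
    eventually_gt_atTop 1] with r hr hr₁
  rw [deriv_deriv_warping C κ (log_pos hr₁).ne']
  exact mul_nonneg (warping_pos C κ hr₁).le hr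

theorem statement13_general (hC : C ≠ 0) (hK : K < 2 * κ * C) :
    (∀ r > 1, deriv (deriv (warping C κ)) r / warping C κ r = negRadialCurvature C κ r) ∧
    ∃ R : ℝ, 1 < R ∧ ∀ A > 0, ∀ B ≥ 0, ∀ r > R,
      deriv (deriv fun s => A * warping C κ s + B) r / (A * warping C κ r + B)
        ≤ deriv (deriv (warping C κ)) r / warping C κ r ∧
      deriv (deriv (warping C κ)) r / warping C κ r ≤ C * (1 + C * r ^ 2) - K / log r := by
  refine ⟨fun r hr => deriv_deriv_warping_div_warping C κ hr, ?_⟩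
  obtain ⟨R, hR, hbounds⟩ := (atTop_basis_Ioi' (1 : ℝ)).eventually_iff.1
    ((eventually_deriv_deriv_warping_nonneg hC κ).and (eventually_negRadialCurvature_le hK))
  refine ⟨R, hR, fun A hA B hB r hr => ?_⟩
  obtain ⟨hconvex, hcurvature⟩ := hbounds hr
  have hr₁ : 1 < r := hR.trans hr
  exact ⟨deriv_deriv_const_mul_add_const_div_le hA hB (warping_pos C κ hr₁) hconvex,
    (deriv_deriv_warping_div_warping C κ hr₁).trans_le hcurvature⟩

end Warping

/-- For `C₀, K > 0` and `κ > K/C₀`, setting `f(r) = e^{C₀ r²/2} (log r)^{-κ}`, one has the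
identity `f''/f = C₀(1+C₀r²) + (κ/(r² log r))(1+(κ+1)/log r) - 2κC₀/log r` for `r > 1`,
and there is `R > 1` such that for all `A, B > 0` and `r > R`, the function
`φ = A f + B` satisfies `φ''/φ ≤ f''/f ≤ C₀(1+C₀r²) - K/log r`. -/
theorem statement13 (C₀ K κ : ℝ) (hC₀ : 0 < C₀) (hK : 0 < K) (hκ : K / C₀ < κ) :
    (∀ r > (1:ℝ),
      deriv (deriv (fun s => Real.exp (C₀*s^2/2) * (Real.log s) ^ (-κ))) r
          / (Real.exp (C₀*r^2/2) * (Real.log r) ^ (-κ))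
        = C₀ * (1 + C₀ * r^2) + κ/(r^2 * Real.log r) * (1 + (κ+1)/Real.log r)
            - 2*κ*C₀/Real.log r) ∧
    ∃ R : ℝ, 1 < R ∧ ∀ A > (0:ℝ), ∀ B > (0:ℝ), ∀ r > R,
      deriv (deriv (fun s => A * (Real.exp (C₀*s^2/2) * (Real.log s) ^ (-κ)) + B)) r
          / (A * (Real.exp (C₀*r^2/2) * (Real.log r) ^ (-κ)) + B)
        ≤ deriv (deriv (fun s => Real.exp (C₀*s^2/2) * (Real.log s) ^ (-κ))) r
          / (Real.exp (C₀*r^2/2) * (Real.log r) ^ (-κ)) ∧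
      deriv (deriv (fun s => Real.exp (C₀*s^2/2) * (Real.log s) ^ (-κ))) r
          / (Real.exp (C₀*r^2/2) * (Real.log r) ^ (-κ))
        ≤ C₀ * (1 + C₀*r^2) - K / Real.log r := by
  have hKκ : K < κ * C₀ := (div_lt_iff₀ hC₀).1 hκ
  obtain ⟨hratio, R, hR, hbounds⟩ := statement13_general hC₀.ne' (by linarith : K < 2 * κ * C₀)
  exact ⟨hratio, R, hR, fun A hA B hB => hbounds A hA B hB.le⟩
end
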